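/- arXiv:1104.3617 — 4 statements merged into one kernel-verified Lean document; each statement's English description precedes it below -/
import Mathlib

section
/- If the function Φ is bounded on (0, ∞), then either every nontrivial zero ρ of the Riemann zeta function satisfies Re ρ = 1/2 (the Riemann hypothesis), or the set of nontrivial zeros ρ with Re ρ > 1/2 is infinite. -/
open Complex Filter Topology MeasureTheory Set

noncomputable def primePhi (x : ℝ) : ℝ :=
  ∑' p : Nat.Primes, Real.log (p : ℕ) * Real.exp (-((p : ℕ) : ℝ) ^ 2 * Real.pi * x)

noncomputable def bigPhi (x : ℝ) : ℝ :=
  (2 * Real.sqrt x * primePhi x - 1) / x ^ ((1 : ℝ) / 4)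

noncomputable def gam (z : ℂ) : ℂ := Complex.Gamma (z / 2) / (Real.pi : ℂ) ^ (z / 2)

def NontrivialZero (ρ : ℂ) : Prop := riemannZeta ρ = 0 ∧ 0 < ρ.re ∧ ρ.re < 1

noncomputable def Zfun (l : ℝ) : ℂ :=
  ∑' ρ : {ρ : ℂ // NontrivialZero ρ}, gam ρ * Complex.exp (-(l : ℂ) * ((ρ : ℂ) - 1 / 2))

/-!
Write `s = 2u`. The Mellin transform of `φ` at `u` is `Γ_ℝ(s) ∑ₚ (log p) p⁻ˢ`, and a bound for `Φ`
near `0` says that `φ(x)` is `x^(-1/2) / 2` up to an error of order `x^(-1/4)`. The main term has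
Mellin transform `1 / (s - 1)`, while that of the error is holomorphic for `re s > 1/2`. As the
proper prime powers also contribute a function holomorphic for `re s > 1/2` to `-ζ'/ζ`, the
logarithmic derivative of `(s - 1) ζ(s)` has no pole there other than possibly `s = 1`: so `ζ` has
no zero with `re s > 1/2`, and by the functional equation none with `0 < re s < 1/2` either. An
error term of order `x^(-1/4 - ε)` for every `ε > 0` is just as good.
-/

section LinearODE

variable {𝕜 : Type*} [NontriviallyNormedField 𝕜] [CompleteSpace 𝕜] [CharZero 𝕜] {P f G : 𝕜 → 𝕜}

lemma ne_zero_of_mul_deriv_eventuallyEq_mul {z : 𝕜} (hP : AnalyticAt 𝕜 P z)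
    (hf : AnalyticAt 𝕜 f z) (hG : AnalyticAt 𝕜 G z) (hPz : P z ≠ 0)
    (hfz : ¬ ∀ᶠ w in 𝓝 z, f w = 0) (hode : P * deriv f =ᶠ[𝓝 z] f * G) : f z ≠ 0 := by
  intro hz
  have horder : analyticOrderAt (deriv f) z = analyticOrderAt f z + analyticOrderAt G z := by
    rw [← analyticOrderAt_mul hf hG, ← analyticOrderAt_congr hode, analyticOrderAt_mul hP hf.deriv,
      hP.analyticOrderAt_eq_zero.2 hPz, zero_add]
  have hderiv : analyticOrderAt (deriv f) z + 1 = analyticOrderAt f z := by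
    simpa [hz] using hf.analyticOrderAt_deriv_add_one
  have hlt : analyticOrderAt f z < analyticOrderAt f z + 1 :=
    (ENat.lt_add_one_iff (mt analyticOrderAt_eq_top.1 hfz)).2 le_rfl
  refine hlt.not_ge ?_
  calc analyticOrderAt f z + 1 ≤ analyticOrderAt f z + analyticOrderAt G z + 1 := by
        gcongr; exact le_self_add
    _ = analyticOrderAt f z := by rw [← horder, hderiv]

lemma ne_zero_of_mul_deriv_eventuallyEq_mul_of_isPreconnected {U : Set 𝕜} (hU : IsOpen U)
    (hUc : IsPreconnected U) (hP : AnalyticOnNhd 𝕜 P U) (hf : AnalyticOnNhd 𝕜 f U)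
    (hG : AnalyticOnNhd 𝕜 G U) {z₀ z : 𝕜} (hz₀ : z₀ ∈ U) (hfz₀ : f z₀ ≠ 0)
    (hode : P * deriv f =ᶠ[𝓝 z₀] f * G) (hz : z ∈ U) (hPz : P z ≠ 0) : f z ≠ 0 := by
  have hfz : ¬ ∀ᶠ w in 𝓝 z, f w = 0 := fun h ↦
    hfz₀ (hf.eqOn_zero_of_preconnected_of_eventuallyEq_zero hUc hz h hz₀)
  have hodeU : EqOn (P * deriv f) (f * G) U :=
    (hP.mul hf.deriv).eqOn_of_preconnected_of_eventuallyEq (hf.mul hG) hUc hz₀ hode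
  exact ne_zero_of_mul_deriv_eventuallyEq_mul (hP z hz) (hf z hz) (hG z hz) hPz hfz
    (hodeU.eventuallyEq_of_mem (hU.mem_nhds hz))

end LinearODE

section Mellin

lemma locallyIntegrableOn_indicator_cpow (b : ℂ) :
    LocallyIntegrableOn ((Ioc 0 1).indicator fun t : ℝ ↦ (t : ℂ) ^ b) (Ioi 0) := by
  refine (locallyIntegrableOn_iff isOpen_Ioi.isLocallyClosed).2 fun K hK hKc ↦ ?_
  refine (ContinuousOn.integrableOn_compact hKc fun t ht ↦ ?_).indicator measurableSet_Ioc
  exact (continuousAt_ofReal_cpow_const t b (.inr (hK ht).ne')).continuousWithinAt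

lemma exists_differentiableOn_mellin_eq_add_div {f : ℝ → ℂ} {b c : ℂ} {r σ : ℝ} (hr : 0 < r)
    (hf : LocallyIntegrableOn f (Ioi 0)) (htop : f =O[atTop] fun t ↦ Real.exp (-r * t))
    (hzero : (fun t : ℝ ↦ f t - c * (t : ℂ) ^ (-b)) =O[𝓝[>] 0] fun t ↦ t ^ (-σ)) :
    ∃ F : ℂ → ℂ, DifferentiableOn ℂ F {s | σ < s.re} ∧
      ∀ s : ℂ, σ < s.re → b.re < s.re → mellin f s = F s + c / (s - b) := by
  set p : ℝ → ℂ := (Ioc 0 1).indicator fun t ↦ (t : ℂ) ^ (-b) with hp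
  set g : ℝ → ℂ := fun t ↦ f t - c * p t with hg
  have hgint : LocallyIntegrableOn g (Ioi 0) :=
    hf.sub ((locallyIntegrableOn_indicator_cpow (-b)).smul c)
  have hgtop : g =O[atTop] fun t ↦ Real.exp (-r * t) := by
    refine htop.congr' ?_ .rfl
    filter_upwards [eventually_gt_atTop 1] with t ht
    simp [hg, hp, ht.not_ge]
  have hgzero : g =O[𝓝[>] 0] fun t ↦ t ^ (-σ) := by
    refine hzero.congr' ?_ .rfl
    filter_upwards [Ioc_mem_nhdsGT one_pos] with t ht
    simp [hg, hp, ht.1, ht.2]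
  refine ⟨mellin g, fun s hs ↦ (mellin_differentiableAt_of_isBigO_rpow_exp hr hgint hgtop hgzero
    hs).differentiableWithinAt, fun s hσ hb ↦ ?_⟩
  have hpmellin := hasMellin_cpow_Ioc (-b) (s := s) (by simpa using hb)
  have hcmellin := hasMellin_const_smul hpmellin.1 c
  have hgconv := mellinConvergent_of_isBigO_rpow_exp hr hgint hgtop hgzero hσ
  calc mellin f s = mellin (fun t ↦ g t + c • p t) s := by simp [hg]
    _ = mellin g s + c • mellin p s := by rw [(hasMellin_add hgconv hcmellin.1).2, hcmellin.2]
    _ = mellin g s + c / (s - b) := by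
      rw [hpmellin.2, smul_eq_mul, mul_one_div, sub_eq_add_neg]

end Mellin

/-- The theta series `∑ a(n) exp(-π n² t)` attached to a sequence of coefficients `a`. Its Mellin
transform at `s / 2` is the Dirichlet series of `a` at `s`, completed by the Archimedean factor
`Γ_ℝ(s)`. -/
noncomputable def thetaSeries (a : ℕ → ℝ) (t : ℝ) : ℝ :=
  ∑' n : ℕ, a n * Real.exp (-Real.pi * (n : ℝ) ^ 2 * t)

section ThetaSeries

variable {a : ℕ → ℝ} {k : ℕ}

lemma hasSum_thetaSeries (ha : a =O[atTop] fun n ↦ (n : ℝ) ^ k) {t : ℝ} (ht : 0 < t) :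
    HasSum (fun n : ℕ ↦ a n * Real.exp (-Real.pi * (n : ℝ) ^ 2 * t)) (thetaSeries a t) := by
  refine Summable.hasSum (summable_of_isBigO_nat
    (Real.summable_pow_mul_exp_neg_nat_mul k (r := Real.pi * t) (by positivity))
    (ha.mul (Asymptotics.isBigO_of_le _ fun n ↦ ?_)))
  have hn : (n : ℝ) ≤ (n : ℝ) ^ 2 := mod_cast Nat.le_self_pow two_ne_zero n
  rw [Real.norm_of_nonneg (Real.exp_pos _).le, Real.norm_of_nonneg (Real.exp_pos _).le,
    Real.exp_le_exp]
  nlinarith [mul_le_mul_of_nonneg_left hn (mul_pos Real.pi_pos ht).le]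

lemma thetaSeries_nonneg (ha₀ : 0 ≤ a) (t : ℝ) : 0 ≤ thetaSeries a t :=
  tsum_nonneg fun n ↦ mul_nonneg (ha₀ n) (Real.exp_pos _).le

lemma antitoneOn_thetaSeries (ha₀ : 0 ≤ a) (ha : a =O[atTop] fun n ↦ (n : ℝ) ^ k) :
    AntitoneOn (thetaSeries a) (Ioi 0) := by
  intro t ht u hu htu
  refine hasSum_le (fun n ↦ ?_) (hasSum_thetaSeries ha hu) (hasSum_thetaSeries ha ht)
  refine mul_le_mul_of_nonneg_left (Real.exp_le_exp.2 ?_) (ha₀ n)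
  exact mul_le_mul_of_nonpos_left htu
    (mul_nonpos_of_nonpos_of_nonneg (neg_nonpos.2 Real.pi_pos.le) (sq_nonneg _))

lemma locallyIntegrableOn_thetaSeries (ha₀ : 0 ≤ a) (ha : a =O[atTop] fun n ↦ (n : ℝ) ^ k) :
    LocallyIntegrableOn (fun t ↦ (thetaSeries a t : ℂ)) (Ioi 0) := by
  refine (locallyIntegrableOn_iff isOpen_Ioi.isLocallyClosed).2 fun K hK hKc ↦ ?_
  exact (((antitoneOn_thetaSeries ha₀ ha).mono hK).integrableOn_isCompact hKc).ofReal

lemma thetaSeries_le_mul_exp (hzero : a 0 = 0) (ha₀ : 0 ≤ a)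
    (ha : a =O[atTop] fun n ↦ (n : ℝ) ^ k) {t : ℝ} (ht : 1 ≤ t) :
    thetaSeries a t ≤ thetaSeries a 1 * Real.exp (1 - t) := by
  refine hasSum_le (fun n ↦ ?_) (hasSum_thetaSeries ha (by linarith))
    ((hasSum_thetaSeries ha one_pos).mul_right _)
  rcases n.eq_zero_or_pos with rfl | hn
  · simp [hzero]
  rw [mul_assoc (a n), ← Real.exp_add]
  refine mul_le_mul_of_nonneg_left (Real.exp_le_exp.2 ?_) (ha₀ n)
  have hn' : (1 : ℝ) ≤ (n : ℝ) ^ 2 := mod_cast Nat.one_le_pow _ _ hn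
  have hpi : 1 ≤ Real.pi * (n : ℝ) ^ 2 := by nlinarith [Real.pi_gt_three]
  nlinarith

lemma thetaSeries_isBigO_exp_atTop (hzero : a 0 = 0) (ha₀ : 0 ≤ a)
    (ha : a =O[atTop] fun n ↦ (n : ℝ) ^ k) :
    (fun t ↦ (thetaSeries a t : ℂ)) =O[atTop] fun t ↦ Real.exp (-1 * t) := by
  refine .of_bound (thetaSeries a 1 * Real.exp 1) ?_
  filter_upwards [eventually_ge_atTop 1] with t ht
  rw [Complex.norm_real, Real.norm_of_nonneg (thetaSeries_nonneg ha₀ t),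
    Real.norm_of_nonneg (Real.exp_pos _).le, mul_assoc, ← Real.exp_add, neg_one_mul,
    ← sub_eq_add_neg]
  exact thetaSeries_le_mul_exp hzero ha₀ ha ht

lemma mellin_thetaSeries_half (hzero : a 0 = 0) (ha : a =O[atTop] fun n ↦ (n : ℝ) ^ k) {s : ℂ}
    (hs : 0 < s.re) (hsum : LSeriesSummable (fun n ↦ (a n : ℂ)) s) :
    mellin (fun t ↦ (thetaSeries a t : ℂ)) (s / 2) =
      Gammaℝ s * LSeries (fun n ↦ (a n : ℂ)) s := by
  have hterm (n : ℕ) : Gammaℝ s * LSeries.term (fun n ↦ (a n : ℂ)) s n =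
      Gammaℝ s * (a n : ℂ) / ((|(n : ℝ)| : ℝ) : ℂ) ^ s := by
    rcases eq_or_ne n 0 with rfl | hn
    · simp [hzero]
    · simp [LSeries.term_of_ne_zero hn, mul_div_assoc]
  rw [LSeries, ← tsum_mul_left, tsum_congr hterm]
  refine (HasSum.tsum_eq (hasSum_mellin_pi_mul_sq hs (fun t ht ↦ ?_) ?_)).symm
  · refine (Complex.hasSum_ofReal.2 (hasSum_thetaSeries ha ht)).congr_fun fun n ↦ ?_
    rcases eq_or_ne n 0 with rfl | hn <;> simp [*]
  · refine hsum.norm.congr fun n ↦ ?_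
    rcases eq_or_ne n 0 with rfl | hn
    · simp [hzero]
    · rw [LSeries.norm_term_eq, if_neg hn, Nat.abs_cast]

lemma exists_differentiableOn_Gammaℝ_mul_LSeries_eq_add_div (hzero : a 0 = 0) (ha₀ : 0 ≤ a)
    (ha : a =O[atTop] fun n ↦ (n : ℝ) ^ k) {b c σ : ℝ}
    (hO : (fun t ↦ thetaSeries a t - c * t ^ (-(b / 2))) =O[𝓝[>] 0] fun t ↦ t ^ (-(σ / 2))) :
    ∃ F : ℂ → ℂ, DifferentiableOn ℂ F {s | σ < s.re} ∧
      ∀ s : ℂ, σ < s.re → b < s.re → 0 < s.re → LSeriesSummable (fun n ↦ (a n : ℂ)) s →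
        Gammaℝ s * LSeries (fun n ↦ (a n : ℂ)) s = F s + 2 * c / (s - b) := by
  have hO' : (fun t : ℝ ↦ (thetaSeries a t : ℂ) - (c : ℂ) * (t : ℂ) ^ (-((b / 2 : ℝ) : ℂ)))
      =O[𝓝[>] 0] fun t ↦ t ^ (-(σ / 2)) := by
    refine (Complex.isBigO_ofReal_left.2 hO).congr' ?_ .rfl
    filter_upwards [self_mem_nhdsWithin] with t ht
    simp [ofReal_cpow (le_of_lt ht)]
  obtain ⟨F, hF, hmellin⟩ := exists_differentiableOn_mellin_eq_add_div one_pos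
    (locallyIntegrableOn_thetaSeries ha₀ ha) (thetaSeries_isBigO_exp_atTop hzero ha₀ ha) hO'
  refine ⟨fun s ↦ F (s / 2), hF.comp (by fun_prop) fun s hs ↦ ?_, fun s hσ hb hs hsum ↦ ?_⟩
  · simpa [div_lt_div_iff_of_pos_right] using hs
  · rw [← mellin_thetaSeries_half hzero ha hs hsum,
      hmellin (s / 2) (by simpa using by linarith) (by simpa using by linarith)]
    have : s - b ≠ 0 := fun h ↦ by
      rw [sub_eq_zero.1 h] at hb; simp at hb
    push_cast
    field_simp

end ThetaSeries

section VonMangoldt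

open ArithmeticFunction Chebyshev LSeries.notation

/-- The von Mangoldt function restricted to the primes: `log p` at a prime `p`, and `0` elsewhere.
It holds the coefficients of `primePhi`. -/
noncomputable def primeMangoldt : ℕ → ℝ := {n | n.Prime}.indicator vonMangoldt

/-- The von Mangoldt function restricted to the non-primes: `log p` at a prime power `p ^ k` with
`2 ≤ k`, and `0` elsewhere. -/
noncomputable def nonprimeMangoldt : ℕ → ℝ := {n | n.Prime}ᶜ.indicator vonMangoldt

lemma primeMangoldt_nonneg : 0 ≤ primeMangoldt :=
  indicator_nonneg fun _ _ ↦ vonMangoldt_nonneg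

lemma nonprimeMangoldt_nonneg : 0 ≤ nonprimeMangoldt :=
  indicator_nonneg fun _ _ ↦ vonMangoldt_nonneg

lemma primeMangoldt_zero : primeMangoldt 0 = 0 := by
  simp [primeMangoldt]

lemma primeMangoldt_isBigO : primeMangoldt =O[atTop] fun n ↦ (n : ℝ) ^ 1 := by
  refine Asymptotics.isBigO_of_le _ fun n ↦ ?_
  rw [Real.norm_of_nonneg (primeMangoldt_nonneg n), pow_one, Real.norm_natCast]
  calc primeMangoldt n ≤ vonMangoldt n := indicator_le_self' (fun _ _ ↦ vonMangoldt_nonneg) n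
    _ ≤ Real.log n := vonMangoldt_le_log
    _ ≤ n := Real.log_le_self n.cast_nonneg

lemma primePhi_eq_thetaSeries : primePhi = thetaSeries primeMangoldt := by
  ext x
  calc primePhi x
      = ∑' p : Nat.Primes, primeMangoldt p * Real.exp (-Real.pi * ((p : ℕ) : ℝ) ^ 2 * x) := by
        refine tsum_congr fun p ↦ ?_
        rw [primeMangoldt, indicator_of_mem (show (p : ℕ) ∈ {n : ℕ | n.Prime} from p.2),
          vonMangoldt_apply_prime p.2]
        ring_nf
    _ = thetaSeries primeMangoldt x :=
        tsum_subtype_eq_of_support_subset (s := {n : ℕ | n.Prime})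
          (f := fun n : ℕ ↦ primeMangoldt n * Real.exp (-Real.pi * (n : ℝ) ^ 2 * x))
          fun n hn ↦ mem_of_indicator_ne_zero (left_ne_zero_of_mul hn)

lemma sum_nonprimeMangoldt (n : ℕ) :
    ∑ k ∈ Finset.Icc 1 n, nonprimeMangoldt k = ψ n - θ n := by
  rw [psi_sub_theta_eq_sum_not_prime, Nat.floor_natCast, Finset.sum_filter]
  exact Finset.sum_congr rfl fun k _ ↦ by simp [nonprimeMangoldt, indicator]

lemma sum_nonprimeMangoldt_isBigO {r : ℝ} (hr : 1 / 2 < r) :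
    (fun n : ℕ ↦ ∑ k ∈ Finset.Icc 1 n, nonprimeMangoldt k) =O[atTop] fun n ↦ (n : ℝ) ^ r := by
  have hlog : (fun x : ℝ ↦ √x * Real.log x) =O[atTop] fun x ↦ x ^ r := by
    refine ((Asymptotics.isBigO_refl (fun x : ℝ ↦ √x) atTop).mul
      (isLittleO_log_rpow_atTop (sub_pos.2 hr)).isBigO).congr' .rfl ?_
    filter_upwards [eventually_gt_atTop 0] with x hx
    rw [Real.sqrt_eq_rpow, ← Real.rpow_add hx, add_sub_cancel]
  refine .trans (.of_bound 2 ?_) (hlog.comp_tendsto tendsto_natCast_atTop_atTop)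
  filter_upwards [eventually_ge_atTop 1] with n hn
  have hn' : (1 : ℝ) ≤ n := mod_cast hn
  rw [Real.norm_of_nonneg (Finset.sum_nonneg fun k _ ↦ nonprimeMangoldt_nonneg k),
    sum_nonprimeMangoldt, Function.comp_apply,
    Real.norm_of_nonneg (mul_nonneg (Real.sqrt_nonneg _) (Real.log_nonneg hn')), ← mul_assoc]
  exact psi_sub_theta_le hn'

lemma LSeriesSummable_nonprimeMangoldt {s : ℂ} (hs : 1 / 2 < s.re) :
    LSeriesSummable ↗nonprimeMangoldt s := by
  obtain ⟨r, hr, hrs⟩ := exists_between hs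
  exact LSeriesSummable_of_sum_norm_bigO_and_nonneg (sum_nonprimeMangoldt_isBigO hr)
    nonprimeMangoldt_nonneg (by linarith) hrs

lemma differentiableOn_LSeries_nonprimeMangoldt :
    DifferentiableOn ℂ (LSeries ↗nonprimeMangoldt) {s | 1 / 2 < s.re} := by
  have habs : LSeries.abscissaOfAbsConv ↗nonprimeMangoldt ≤ (1 / 2 : ℝ) :=
    LSeries.abscissaOfAbsConv_le_of_forall_lt_LSeriesSummable fun y hy ↦
      LSeriesSummable_nonprimeMangoldt (by simpa using hy)
  exact (LSeries_differentiableOn _).mono fun s hs ↦ habs.trans_lt (EReal.coe_lt_coe_iff.2 hs)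

lemma primeMangoldt_eq_sub : ↗primeMangoldt = ↗vonMangoldt - ↗nonprimeMangoldt := by
  ext n
  rw [Pi.sub_apply, ← ofReal_sub, primeMangoldt, nonprimeMangoldt,
    eq_sub_of_add_eq (congrFun (indicator_self_add_compl {n | n.Prime} vonMangoldt) n)]

lemma LSeriesSummable_primeMangoldt {s : ℂ} (hs : 1 < s.re) :
    LSeriesSummable ↗primeMangoldt s := by
  rw [primeMangoldt_eq_sub]
  exact (LSeriesSummable_vonMangoldt hs).sub (LSeriesSummable_nonprimeMangoldt (by linarith))

lemma LSeries_vonMangoldt_eq_add {s : ℂ} (hs : 1 < s.re) :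
    LSeries ↗vonMangoldt s = LSeries ↗primeMangoldt s + LSeries ↗nonprimeMangoldt s := by
  rw [primeMangoldt_eq_sub, LSeries_sub (LSeriesSummable_vonMangoldt hs)
    (LSeriesSummable_nonprimeMangoldt (by linarith)), sub_add_cancel]

lemma sub_one_mul_deriv_riemannZeta₁ {s : ℂ} (hs : 1 < s.re) :
    (s - 1) * deriv riemannZeta₁ s =
      riemannZeta₁ s * (1 - (s - 1) * LSeries ↗vonMangoldt s) := by
  have hne {z : ℂ} (hz : z ≠ 1) : riemannZeta₁ z = (z - 1) * riemannZeta z := by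
    rw [riemannZeta_eq_inv_sub_mul hz, mul_inv_cancel_left₀ (sub_ne_zero.2 hz)]
  have hs1 : s ≠ 1 := by rintro rfl; simp at hs
  have hderiv : deriv riemannZeta₁ s = riemannZeta s + (s - 1) * deriv riemannZeta s := by
    rw [(show riemannZeta₁ =ᶠ[𝓝 s] fun z ↦ (z - 1) * riemannZeta z from
      (eventually_ne_nhds hs1).mono fun z ↦ hne).deriv_eq,
      deriv_fun_mul (by fun_prop) (differentiableAt_riemannZeta hs1)]
    simp
  rw [hderiv, hne hs1, LSeries_vonMangoldt_eq_deriv_riemannZeta_div hs]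
  have := riemannZeta_ne_zero_of_one_lt_re hs
  field_simp
  ring

lemma exists_differentiableOn_sub_one_mul_LSeries_primeMangoldt {σ : ℝ}
    (hO : (fun x ↦ primePhi x - 1 / 2 * x ^ (-(1 / 2) : ℝ)) =O[𝓝[>] 0] fun x ↦ x ^ (-(σ / 2))) :
    ∃ F : ℂ → ℂ, DifferentiableOn ℂ F {s | σ < s.re} ∧
      ∀ s : ℂ, σ < s.re → 1 < s.re → (s - 1) * LSeries ↗primeMangoldt s = F s := by
  rw [primePhi_eq_thetaSeries] at hO
  obtain ⟨F, hF, hLSeries⟩ := exists_differentiableOn_Gammaℝ_mul_LSeries_eq_add_div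
    primeMangoldt_zero primeMangoldt_nonneg primeMangoldt_isBigO hO
  refine ⟨fun s ↦ ((s - 1) * F s + 1) * (Gammaℝ s)⁻¹, ?_, fun s hσ hs ↦ ?_⟩
  · exact (((differentiableOn_id.sub_const 1).mul hF).add_const 1).mul
      differentiable_Gammaℝ_inv.differentiableOn
  · have hs1 : s - 1 ≠ 0 := sub_ne_zero.2 fun h ↦ by simp [h] at hs
    have hΓ : Gammaℝ s ≠ 0 := Gammaℝ_ne_zero_of_re_pos (by linarith)
    have hs' := hLSeries s hσ hs (by linarith) (LSeriesSummable_primeMangoldt hs)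
    push_cast at hs'
    field_simp at hs' ⊢
    linear_combination hs'

theorem riemannZeta_ne_zero_of_primePhi_sub_isBigO {σ : ℝ} (hσ : 1 / 2 ≤ σ)
    (hO : (fun x ↦ primePhi x - 1 / 2 * x ^ (-(1 / 2) : ℝ)) =O[𝓝[>] 0] fun x ↦ x ^ (-(σ / 2)))
    {ρ : ℂ} (hρ : σ < ρ.re) : riemannZeta ρ ≠ 0 := by
  rcases le_or_gt 1 ρ.re with hρ1 | hρ1
  · exact riemannZeta_ne_zero_of_one_le_re hρ1
  obtain ⟨F, hF, hFeq⟩ := exists_differentiableOn_sub_one_mul_LSeries_primeMangoldt hO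
  have hU : IsOpen {s : ℂ | σ < s.re} := isOpen_lt continuous_const continuous_re
  have hG : DifferentiableOn ℂ (fun s ↦ 1 - F s - (s - 1) * LSeries ↗nonprimeMangoldt s)
      {s | σ < s.re} :=
    ((differentiableOn_const 1).sub hF).sub ((differentiableOn_id.sub_const 1).mul
      (differentiableOn_LSeries_nonprimeMangoldt.mono fun s hs ↦ hσ.trans_lt hs))
  have hode : (fun s ↦ s - 1) * deriv riemannZeta₁ =ᶠ[𝓝 2]
      riemannZeta₁ * fun s ↦ 1 - F s - (s - 1) * LSeries ↗nonprimeMangoldt s := by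
    filter_upwards [(isOpen_lt continuous_const continuous_re).mem_nhds
      (show (1 : ℝ) < (2 : ℂ).re by simp)] with s (hs : 1 < s.re)
    simp only [Pi.mul_apply, sub_one_mul_deriv_riemannZeta₁ hs, LSeries_vonMangoldt_eq_add hs,
      ← hFeq s (by linarith) hs]
    ring
  have hζ₁ (s : ℂ) (hs : riemannZeta₁ s = 0) (hs1 : s ≠ 1) : riemannZeta s = 0 := by
    rw [riemannZeta_eq_inv_sub_mul hs1, hs, mul_zero]
  have hρ_ne : ρ ≠ 1 := by rintro rfl; simp at hρ1
  rw [riemannZeta_eq_inv_sub_mul hρ_ne]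
  refine mul_ne_zero (inv_ne_zero (sub_ne_zero.2 hρ_ne)) ?_
  exact ne_zero_of_mul_deriv_eventuallyEq_mul_of_isPreconnected hU
    (convex_halfSpace_re_gt σ).isPreconnected
    ((differentiable_id.sub_const 1).differentiableOn.analyticOnNhd hU)
    (differentiable_riemannZeta₁.differentiableOn.analyticOnNhd hU) (hG.analyticOnNhd hU)
    (show σ < (2 : ℂ).re by simp; linarith)
    (fun h ↦ riemannZeta_ne_zero_of_one_lt_re (by simp) (hζ₁ 2 h (by simp))) hode hρ
    (sub_ne_zero.2 hρ_ne)

end VonMangoldt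

lemma primePhi_sub_eq_bigPhi_mul {x : ℝ} (hx : 0 < x) :
    primePhi x - 1 / 2 * x ^ (-(1 / 2) : ℝ) = 1 / 2 * (bigPhi x * x ^ (-(1 / 4) : ℝ)) := by
  have hsqrt : √x = x ^ (1 / 4 : ℝ) * x ^ (1 / 4 : ℝ) := by
    rw [← Real.rpow_add hx, Real.sqrt_eq_rpow]; norm_num
  rw [bigPhi, Real.rpow_neg hx.le, Real.rpow_neg hx.le, ← Real.sqrt_eq_rpow, hsqrt]
  field_simp

lemma primePhi_sub_isBigO_of_bigPhi_isBigO {ε : ℝ}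
    (hΦ : bigPhi =O[𝓝[>] 0] fun x ↦ x ^ (-ε)) :
    (fun x ↦ primePhi x - 1 / 2 * x ^ (-(1 / 2) : ℝ)) =O[𝓝[>] 0]
      fun x ↦ x ^ (-((1 / 2 + 2 * ε) / 2)) := by
  refine ((hΦ.mul (Asymptotics.isBigO_refl (· ^ (-(1 / 4) : ℝ)) _)).const_mul_left
    (1 / 2)).congr' ?_ ?_
  all_goals filter_upwards [self_mem_nhdsWithin] with x (hx : 0 < x)
  · exact (primePhi_sub_eq_bigPhi_mul hx).symm
  · rw [← Real.rpow_add hx]; ring_nf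

lemma NontrivialZero.one_sub {ρ : ℂ} (hρ : NontrivialZero ρ) : NontrivialZero (1 - ρ) := by
  obtain ⟨hζ, hpos, hlt⟩ := hρ
  refine ⟨?_, by simpa using hlt, by simpa using hpos⟩
  have hne_neg (n : ℕ) : ρ ≠ -n := by
    rintro rfl
    simp only [neg_re, natCast_re, neg_pos] at hpos
    exact hpos.not_ge n.cast_nonneg
  rw [riemannZeta_one_sub hne_neg (by rintro rfl; simp at hlt), hζ, mul_zero]

lemma isBigO_rpow_neg_of_abs_le {f : ℝ → ℝ} (hf : ∃ C, ∀ x, 0 < x → |f x| ≤ C) {ε : ℝ}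
    (hε : 0 ≤ ε) : f =O[𝓝[>] 0] fun x ↦ x ^ (-ε) := by
  obtain ⟨C, hC⟩ := hf
  refine .of_bound C ?_
  filter_upwards [Ioc_mem_nhdsGT one_pos] with x hx
  have hone : 1 ≤ x ^ (-ε) := Real.one_le_rpow_of_pos_of_le_one_of_nonpos hx.1 hx.2 (by linarith)
  have hC0 : 0 ≤ C := (abs_nonneg _).trans (hC x hx.1)
  rw [Real.norm_of_nonneg (zero_le_one.trans hone)]
  exact (hC x hx.1).trans (le_mul_of_one_le_right hC0 hone)

theorem stmt_1_general (hΦ : ∀ ε : ℝ, 0 < ε → bigPhi =O[𝓝[>] 0] fun x ↦ x ^ (-ε)) {ρ : ℂ}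
    (hρ : NontrivialZero ρ) : ρ.re = 1 / 2 := by
  have hle {ρ : ℂ} (hρ : NontrivialZero ρ) : ρ.re ≤ 1 / 2 := by
    by_contra! hlt
    set ε := (ρ.re - 1 / 2) / 4 with hε
    have hO := primePhi_sub_isBigO_of_bigPhi_isBigO (hΦ ε (by linarith))
    exact riemannZeta_ne_zero_of_primePhi_sub_isBigO (by linarith) hO (by linarith) hρ.1
  refine le_antisymm (hle hρ) ?_
  have h := hle hρ.one_sub
  rw [sub_re, one_re] at h
  linarith

/-- If Φ is bounded on (0,∞), then either every nontrivial zero of ζ has real part 1/2,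
or there are infinitely many nontrivial zeros with real part > 1/2. -/
theorem stmt_1
    (hbdd : ∃ C : ℝ, ∀ x : ℝ, 0 < x → |bigPhi x| ≤ C) :
    (∀ ρ : ℂ, NontrivialZero ρ → ρ.re = 1 / 2) ∨
      {ρ : ℂ | NontrivialZero ρ ∧ 1 / 2 < ρ.re}.Infinite := by
  exact Or.inl fun _ ↦ stmt_1_general fun _ hε ↦ isBigO_rpow_neg_of_abs_le hbdd hε.le
end

section
/- The limit, as real a tends to 1/2 from the right, of −ζ'(a)/ζ(a) − ∑_{m≥2} ∑_p (log p)·p^{−ma} + 1/(2a−1) exists and is finite; here for each a with 1/2 < a < 1 one has ζ(a) ≠ 0 and the double series over integers m ≥ 2 and primes p converges absolutely. -/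
open Complex Filter Topology

/-!
Absolute convergence lets us split the sum over `m ≥ 2` by the parity of `m`. The even `m` give
the von Mangoldt series at `2 s`, that is `-ζ'(2 s) / ζ(2 s)`, whose pole at `s = 1 / 2` is
cancelled by `1 / (2 s - 1)`; the odd `m ≥ 3` give a series that converges for `re s > 1 / 3`,
hence is continuous at `1 / 2`. There remains `-ζ' / ζ` at `1 / 2`, which is finite because `ζ` has
no real zero in `(0, 1)`: there `(1 - 2 ^ (1 - a)) ζ(a)` is the alternating series
`∑ (-1) ^ (n - 1) n ^ (-a)`, whose terms paired as `(2 k + 1) ^ (-a) - (2 k + 2) ^ (-a)` are all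
positive.
-/

lemma norm_ofReal_cpow_neg_sub_le {x y : ℝ} (hx : 0 < x) (hxy : x ≤ y) {s : ℂ}
    (hs : -1 ≤ s.re) :
    ‖(x : ℂ) ^ (-s) - (y : ℂ) ^ (-s)‖ ≤ ‖s‖ * x ^ (-(s.re + 1)) * (y - x) := by
  rcases eq_or_ne s 0 with rfl | hs0
  · simp
  have hderiv (t : ℝ) (ht : t ∈ Set.Icc x y) :
      HasDerivWithinAt (fun t : ℝ ↦ (t : ℂ) ^ (-s)) (-s * (t : ℂ) ^ (-s - 1)) (Set.Icc x y) t :=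
    (hasDerivAt_ofReal_cpow_const (hx.trans_le ht.1).ne' (neg_ne_zero.mpr hs0)).hasDerivWithinAt
  have hbound (t : ℝ) (ht : t ∈ Set.Ico x y) :
      ‖-s * (t : ℂ) ^ (-s - 1)‖ ≤ ‖s‖ * x ^ (-(s.re + 1)) := by
    have hre : (-s - 1).re = -(s.re + 1) := by simp only [sub_re, neg_re, one_re]; ring
    rw [norm_mul, norm_neg, norm_cpow_eq_rpow_re_of_pos (hx.trans_le ht.1), hre]
    gcongr ‖s‖ * ?_
    exact Real.rpow_le_rpow_of_nonpos hx ht.1 (by linarith)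
  rw [norm_sub_rev]
  exact norm_image_sub_le_of_norm_deriv_le_segment' hderiv hbound y ⟨hxy, le_rfl⟩

/-- The `k`-th pair of consecutive terms of the alternating series `∑ (-1) ^ (n - 1) n ^ (-s)`. -/
noncomputable def dirichletEtaTerm (k : ℕ) (s : ℂ) : ℂ :=
  ((2 * k + 1 : ℕ) : ℂ) ^ (-s) - ((2 * k + 2 : ℕ) : ℂ) ^ (-s)

/-- The Dirichlet eta function `∑ (-1) ^ (n - 1) n ^ (-s)`. The terms are grouped in pairs, so that
the series converges absolutely on the whole half-plane `0 < re s`. -/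
noncomputable def dirichletEta (s : ℂ) : ℂ := ∑' k, dirichletEtaTerm k s

lemma norm_dirichletEtaTerm_le (k : ℕ) {s : ℂ} (hs : -1 ≤ s.re) :
    ‖dirichletEtaTerm k s‖ ≤ ‖s‖ * ((2 * k + 1 : ℕ) : ℝ) ^ (-(s.re + 1)) := by
  have h := norm_ofReal_cpow_neg_sub_le (x := (2 * k + 1 : ℕ)) (y := (2 * k + 2 : ℕ))
    (by positivity) (by gcongr; simp) hs
  simpa [dirichletEtaTerm, add_sub_add_left_eq_sub, show (2 : ℝ) - 1 = 1 by norm_num] using h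

lemma summable_two_mul_add_one_rpow {σ : ℝ} (hσ : 0 < σ) :
    Summable fun k : ℕ ↦ ((2 * k + 1 : ℕ) : ℝ) ^ (-(σ + 1)) :=
  (Real.summable_nat_rpow.mpr (by linarith)).comp_injective
    (i := fun k : ℕ ↦ 2 * k + 1) fun _ _ h ↦ by simpa using h

lemma summable_dirichletEtaTerm {s : ℂ} (hs : 0 < s.re) :
    Summable fun k ↦ dirichletEtaTerm k s :=
  .of_norm_bounded ((summable_two_mul_add_one_rpow hs).mul_left ‖s‖)
    fun k ↦ norm_dirichletEtaTerm_le k (by linarith)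

lemma differentiable_dirichletEtaTerm (k : ℕ) : Differentiable ℂ (dirichletEtaTerm k) :=
  (differentiable_neg.const_cpow (.inl (Nat.cast_ne_zero.mpr (Nat.succ_ne_zero _)))).sub
    (differentiable_neg.const_cpow (.inl (Nat.cast_ne_zero.mpr (Nat.succ_ne_zero _))))

lemma differentiableOn_dirichletEta : DifferentiableOn ℂ dirichletEta {s | 0 < s.re} := by
  intro s (hs : 0 < s.re)
  let U : Set ℂ := {z | s.re / 2 < z.re ∧ ‖z‖ < ‖s‖ + 1}
  have hU : IsOpen U :=
    (isOpen_lt continuous_const continuous_re).inter (isOpen_lt continuous_norm continuous_const)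
  have hbound (k : ℕ) (z : ℂ) (hz : z ∈ U) :
      ‖dirichletEtaTerm k z‖ ≤ (‖s‖ + 1) * ((2 * k + 1 : ℕ) : ℝ) ^ (-(s.re / 2 + 1)) := by
    refine (norm_dirichletEtaTerm_le k (by linarith [hz.1])).trans ?_
    gcongr
    · exact hz.2.le
    · simp
    · exact hz.1.le
  have hdiff : DifferentiableOn ℂ dirichletEta U :=
    differentiableOn_tsum_of_summable_norm
      ((summable_two_mul_add_one_rpow (half_pos hs)).mul_left (‖s‖ + 1))
      (fun k ↦ (differentiable_dirichletEtaTerm k).differentiableOn) hU hbound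
  exact (hdiff.differentiableAt
    (hU.mem_nhds ⟨half_lt_self hs, lt_add_one _⟩)).differentiableWithinAt

lemma dirichletEta_eq_mul_riemannZeta_of_one_lt_re {s : ℂ} (hs : 1 < s.re) :
    dirichletEta s = (1 - 2 ^ (1 - s)) * riemannZeta s := by
  let f (n : ℕ) : ℂ := ((n + 1 : ℕ) : ℂ) ^ (-s)
  have hf : Summable f := by
    simpa only [f, cpow_neg, one_div] using
      (summable_nat_add_iff 1).mpr (summable_one_div_nat_cpow.mpr hs)
  have hζ : ∑' n, f n = riemannZeta s := by
    simp only [f, zeta_eq_tsum_one_div_nat_add_one_cpow hs, cpow_neg, one_div, Nat.cast_add_one]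
  have hodd_index (k : ℕ) : f (2 * k + 1) = 2 ^ (-s) * f k := by
    exact_mod_cast natCast_mul_natCast_cpow 2 (k + 1) (-s)
  have heven : Summable fun k ↦ f (2 * k) := hf.comp_injective (mul_right_injective₀ two_ne_zero)
  have hodd : Summable fun k ↦ f (2 * k + 1) := by simpa only [hodd_index] using hf.mul_left _
  have hoddζ : ∑' k, f (2 * k + 1) = 2 ^ (-s) * riemannZeta s := by
    simp only [hodd_index, tsum_mul_left, hζ]
  have hsplit : ∑' k, f (2 * k) + ∑' k, f (2 * k + 1) = riemannZeta s :=
    (tsum_even_add_odd heven hodd).trans hζ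
  have hpow : (2 : ℂ) ^ (1 - s) = 2 * 2 ^ (-s) := by
    rw [sub_eq_add_neg, cpow_add _ _ two_ne_zero, cpow_one]
  calc dirichletEta s = ∑' k, f (2 * k) - ∑' k, f (2 * k + 1) := heven.tsum_sub hodd
    _ = (1 - 2 ^ (1 - s)) * riemannZeta s := by rw [hpow]; linear_combination hsplit - 2 * hoddζ

lemma dirichletEta_eq_mul_riemannZeta {s : ℂ} (hs : 0 < s.re) (hs1 : s ≠ 1) :
    dirichletEta s = (1 - 2 ^ (1 - s)) * riemannZeta s := by
  have hopen : IsOpen {s : ℂ | 0 < s.re} := isOpen_lt continuous_const continuous_re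
  have hη : AnalyticOnNhd ℂ (fun s ↦ (s - 1) * dirichletEta s) {s | 0 < s.re} :=
    ((differentiable_id.sub_const 1).differentiableOn.mul
      differentiableOn_dirichletEta).analyticOnNhd hopen
  have hpow : Differentiable ℂ fun s : ℂ ↦ 1 - (2 : ℂ) ^ (1 - s) :=
    (differentiable_const _).sub
      ((differentiable_id.const_sub 1).const_cpow (.inl two_ne_zero))
  have hζ : AnalyticOnNhd ℂ (fun s ↦ (1 - 2 ^ (1 - s)) * riemannZeta₁ s) {s | 0 < s.re} :=
    (hpow.mul differentiable_riemannZeta₁).differentiableOn.analyticOnNhd hopen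
  have hnear : (fun s ↦ (s - 1) * dirichletEta s) =ᶠ[𝓝 2]
      fun s ↦ (1 - 2 ^ (1 - s)) * riemannZeta₁ s := by
    filter_upwards [(isOpen_lt continuous_const continuous_re).mem_nhds
      (show (1 : ℝ) < (2 : ℂ).re by simp)] with z (hz : 1 < z.re)
    have hz1 : z ≠ 1 := by rintro rfl; simp at hz
    rw [dirichletEta_eq_mul_riemannZeta_of_one_lt_re hz, riemannZeta_eq_inv_sub_mul hz1]
    field [sub_ne_zero_of_ne hz1]
  have hmul : (s - 1) * dirichletEta s = (1 - 2 ^ (1 - s)) * riemannZeta₁ s :=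
    hη.eqOn_of_preconnected_of_eventuallyEq hζ (convex_halfSpace_re_gt 0).isPreconnected
      (show (0 : ℝ) < (2 : ℂ).re by simp) hnear hs
  rw [riemannZeta_eq_inv_sub_mul hs1]
  field_simp [sub_ne_zero_of_ne hs1]
  linear_combination hmul

lemma dirichletEta_ofReal_re_pos {a : ℝ} (ha : 0 < a) : 0 < (dirichletEta a).re := by
  have hterm (k : ℕ) : 0 < (dirichletEtaTerm k a).re := by
    have hpow (n : ℕ) : ((n : ℂ) ^ (-a : ℂ)).re = (n : ℝ) ^ (-a) := by
      rw [← ofReal_natCast, ← ofReal_neg, ← ofReal_cpow n.cast_nonneg, ofReal_re]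
    rw [dirichletEtaTerm, sub_re, hpow, hpow, sub_pos]
    exact Real.rpow_lt_rpow_of_neg (by positivity) (by gcongr; simp) (neg_neg_of_pos ha)
  have hsum := summable_dirichletEtaTerm (s := a) (by simpa using ha)
  rw [dirichletEta, re_tsum hsum]
  exact (hasSum_re hsum.hasSum).summable.tsum_pos (fun k ↦ (hterm k).le) 0 (hterm 0)

lemma riemannZeta_ofReal_ne_zero {a : ℝ} (ha : 0 < a) (ha1 : a ≠ 1) : riemannZeta a ≠ 0 := by
  intro hζ
  have hη := dirichletEta_eq_mul_riemannZeta (s := a) (by simpa using ha) (by exact_mod_cast ha1)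
  rw [hζ, mul_zero] at hη
  simpa [hη] using dirichletEta_ofReal_re_pos ha

/-- The term `log p * p ^ (-m s)` that the prime power `p ^ m` contributes to the Dirichlet series
of the von Mangoldt function `Λ` at `s`. -/
noncomputable def primePowTerm (s : ℂ) (m : ℕ) (p : Nat.Primes) : ℂ :=
  Real.log (p : ℕ) * ((p : ℕ) : ℂ) ^ (-(m : ℂ) * s)

lemma primePowTerm_ofReal (a : ℝ) (m : ℕ) (p : Nat.Primes) :
    primePowTerm a m p = (Real.log (p : ℕ) * ((p : ℕ) : ℝ) ^ (-(m : ℝ) * a) : ℝ) := by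
  rw [primePowTerm, ofReal_mul, ofReal_cpow (Nat.cast_nonneg _)]
  push_cast
  rfl

lemma primePowTerm_natCast_mul (r : ℕ) (s : ℂ) (m : ℕ) (p : Nat.Primes) :
    primePowTerm (r * s) m p = primePowTerm s (r * m) p := by
  rw [primePowTerm, primePowTerm]
  congr 2
  push_cast
  ring

lemma primePowTerm_add (s : ℂ) (m n : ℕ) (p : Nat.Primes) :
    primePowTerm s (m + n) p = primePowTerm s m p * (((p : ℕ) : ℂ) ^ (-s)) ^ n := by
  have hp : ((p : ℕ) : ℂ) ≠ 0 := Nat.cast_ne_zero.mpr p.2.ne_zero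
  rw [primePowTerm, primePowTerm, mul_assoc, ← cpow_nat_mul, ← cpow_add _ _ hp]
  congr 2
  push_cast
  ring

lemma norm_primePowTerm (s : ℂ) (m : ℕ) (p : Nat.Primes) :
    ‖primePowTerm s m p‖ = Real.log (p : ℕ) * ((p : ℕ) : ℝ) ^ (-(m : ℝ) * s.re) := by
  rw [primePowTerm, norm_mul, norm_real, Real.norm_of_nonneg (Real.log_natCast_nonneg _),
    norm_natCast_cpow_of_pos p.2.pos]
  simp

lemma norm_primePowTerm_le_of_re_le {s t : ℂ} (h : t.re ≤ s.re) (m : ℕ) (p : Nat.Primes) :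
    ‖primePowTerm s m p‖ ≤ ‖primePowTerm t m p‖ := by
  rw [norm_primePowTerm, norm_primePowTerm]
  have hp : (1 : ℝ) ≤ (p : ℕ) := mod_cast p.2.one_le
  refine mul_le_mul_of_nonneg_left (Real.rpow_le_rpow_of_exponent_le hp ?_)
    (Real.log_natCast_nonneg _)
  exact mul_le_mul_of_nonpos_left h (by simp)

lemma continuous_primePowTerm (m : ℕ) (p : Nat.Primes) :
    Continuous fun s ↦ primePowTerm s m p :=
  continuous_const.mul
    ((continuous_const_mul _).const_cpow (.inl (Nat.cast_ne_zero.mpr p.2.ne_zero)))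

open ArithmeticFunction in
lemma hasSum_primePowTerm {s : ℂ} (hs : 1 < s.re) :
    HasSum (fun x : ℕ × Nat.Primes ↦ primePowTerm s (x.1 + 1) x.2)
      (-deriv riemannZeta s / riemannZeta s) := by
  let f := LSeries.term (fun n ↦ (Λ n : ℂ)) s
  have hf : HasSum f (-deriv riemannZeta s / riemannZeta s) :=
    LSeries_vonMangoldt_eq_deriv_riemannZeta_div hs ▸ (LSeriesSummable_vonMangoldt hs).hasSum
  have hsupp : Function.support f ⊆ {n | IsPrimePow n} := by
    refine Function.support_subset_iff'.mpr fun n hn ↦ ?_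
    have hΛ : Λ n = 0 := vonMangoldt_eq_zero_iff.mpr hn
    simp [f, LSeries.term_def, hΛ]
  have hterm (k : ℕ) (p : Nat.Primes) : f ((p : ℕ) ^ (k + 1)) = primePowTerm s (k + 1) p := by
    simp only [f]
    rw [LSeries.term_of_ne_zero (pow_ne_zero _ p.2.ne_zero), vonMangoldt_apply_pow k.succ_ne_zero,
      vonMangoldt_apply_prime p.2, primePowTerm, Nat.cast_pow, ← natCast_cpow_natCast_mul,
      div_eq_mul_inv, ← cpow_neg, neg_mul]
  refine ((((Equiv.prodComm _ _).trans Nat.Primes.prodNatEquiv).hasSum_iff).mpr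
    ((hasSum_subtype_iff_of_support_subset hsupp).mpr hf)).congr_fun fun x ↦
      (hterm x.1 x.2).symm

-- The powers `m = r` form the `m = 1` part of the von Mangoldt series at `r * s`, and each further
-- power contributes a factor of norm at most `2 ^ (-re s) < 1`.
lemma summable_norm_primePowTerm {r : ℕ} {s : ℂ} (hs : 1 < r * s.re) :
    Summable fun x : ℕ × Nat.Primes ↦ ‖primePowTerm s (r + x.1) x.2‖ := by
  have hre : 0 < s.re := pos_of_mul_pos_right (one_pos.trans hs) r.cast_nonneg
  have hbase : Summable fun p ↦ ‖primePowTerm s r p‖ := by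
    have h := (hasSum_primePowTerm (s := r * s) (by simpa using hs)).summable.norm.prod_factor 0
    simpa only [zero_add, primePowTerm_natCast_mul, mul_one] using h
  have hgeom : Summable fun k : ℕ ↦ ((2 : ℝ) ^ (-s.re)) ^ k :=
    summable_geometric_of_lt_one (by positivity)
      (Real.rpow_lt_one_of_one_lt_of_neg one_lt_two (neg_neg_of_pos hre))
  have hratio (p : Nat.Primes) : ‖((p : ℕ) : ℂ) ^ (-s)‖ ≤ 2 ^ (-s.re) := by
    rw [norm_natCast_cpow_of_pos p.2.pos, neg_re]
    exact Real.rpow_le_rpow_of_nonpos two_pos (mod_cast p.2.two_le) (neg_nonpos.mpr hre.le)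
  refine (hgeom.mul_of_nonneg hbase (fun k ↦ by positivity) fun p ↦ norm_nonneg _).of_nonneg_of_le
    (fun x ↦ norm_nonneg _) fun ⟨k, p⟩ ↦ ?_
  rw [primePowTerm_add, norm_mul, norm_pow, mul_comm]
  gcongr
  exact hratio p

/-- The sum of `log p * p ^ (-m s)` over all primes `p` and all odd `m ≥ 3`. -/
noncomputable def oddPrimePowSum (s : ℂ) : ℂ :=
  ∑' x : ℕ × Nat.Primes, primePowTerm s (2 * x.1 + 3) x.2

lemma summable_norm_primePowTerm_odd {s : ℂ} (hs : 1 < 3 * s.re) :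
    Summable fun x : ℕ × Nat.Primes ↦ ‖primePowTerm s (2 * x.1 + 3) x.2‖ := by
  have hinj : Function.Injective (Prod.map (2 * ·) id : ℕ × Nat.Primes → ℕ × Nat.Primes) :=
    (mul_right_injective₀ two_ne_zero).prodMap Function.injective_id
  simpa only [Function.comp_def, Prod.map, id, add_comm 3] using
    (summable_norm_primePowTerm (r := 3) hs).comp_injective hinj

lemma continuousAt_oddPrimePowSum {s : ℂ} (hs : 1 < 3 * s.re) :
    ContinuousAt oddPrimePowSum s := by
  obtain ⟨σ, hσ, hσs⟩ : ∃ σ, 1 / 3 < σ ∧ σ < s.re := exists_between (by linarith)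
  have hcont : ContinuousOn oddPrimePowSum {z | σ < z.re} :=
    continuousOn_tsum (fun x ↦ (continuous_primePowTerm _ x.2).continuousOn)
      (summable_norm_primePowTerm_odd (s := σ) (by rw [ofReal_re]; linarith))
      fun x z (hz : σ < z.re) ↦ norm_primePowTerm_le_of_re_le (by simpa using hz.le) _ _
  exact hcont.continuousAt ((isOpen_lt continuous_const continuous_re).mem_nhds hσs)

/-- The index shift `n ↦ n + r`, which identifies sums over `m ≥ r` with sums over `ℕ`. -/
def natEquivSubtypeLe (r : ℕ) : ℕ ≃ {m : ℕ // r ≤ m} where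
  toFun n := ⟨n + r, Nat.le_add_left r n⟩
  invFun m := m - r
  left_inv n := Nat.add_sub_cancel n r
  right_inv m := Subtype.ext (Nat.sub_add_cancel m.2)

lemma hasSum_of_even_of_odd {M β : Type*} [AddCommMonoid M] [TopologicalSpace M]
    [ContinuousAdd M] {f : ℕ → β → M} {r : ℕ} {u v : M}
    (heven : HasSum (fun x : ℕ × β ↦ f (2 * x.1 + r) x.2) u)
    (hodd : HasSum (fun x : ℕ × β ↦ f (2 * x.1 + (r + 1)) x.2) v) :
    HasSum (fun q : {m : ℕ // r ≤ m} × β ↦ f q.1 q.2) (u + v) := by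
  let e : (ℕ × β) ⊕ (ℕ × β) ≃ {m : ℕ // r ≤ m} × β :=
    (Equiv.sumProdDistrib ℕ ℕ β).symm.trans
      (Equiv.prodCongrLeft fun _ ↦ Equiv.natSumNatEquivNat.trans (natEquivSubtypeLe r))
  refine e.hasSum_iff.mp (HasSum.sum (heven.congr_fun fun x ↦ ?_) (hodd.congr_fun fun x ↦ ?_))
  · simp [e, natEquivSubtypeLe]
  · simp [e, natEquivSubtypeLe, add_assoc, add_comm 1]

lemma hasSum_primePowTerm_two_le {s : ℂ} (hs : 1 / 2 < s.re) :
    HasSum (fun q : {m : ℕ // 2 ≤ m} × Nat.Primes ↦ primePowTerm s q.1 q.2)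
      (-deriv riemannZeta (2 * s) / riemannZeta (2 * s) + oddPrimePowSum s) := by
  refine hasSum_of_even_of_odd (f := primePowTerm s) ?_
    (summable_norm_primePowTerm_odd (by linarith)).of_norm.hasSum
  have h := hasSum_primePowTerm (s := (2 : ℕ) * s) (by simpa using by linarith)
  simp only [primePowTerm_natCast_mul] at h
  exact_mod_cast h

lemma tendsto_logDeriv_riemannZeta_two_mul_add :
    Tendsto (fun s : ℂ ↦ deriv riemannZeta (2 * s) / riemannZeta (2 * s) + 1 / (2 * s - 1))
      (𝓝[≠] (1 / 2)) (𝓝 Real.eulerMascheroniConstant) := by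
  have hζ : Tendsto (fun s : ℂ ↦ deriv riemannZeta s / riemannZeta s + 1 / (s - 1)) (𝓝[≠] 1)
      (𝓝 Real.eulerMascheroniConstant) := by
    simpa only [sub_add_cancel, zero_add, one_div] using ((Asymptotics.isLittleO_one_iff ℂ).mp
      log_deriv_riemannZeta_add_inv_sub_sub_isLittleO).add_const
        (Real.eulerMascheroniConstant : ℂ)
  refine hζ.comp (tendsto_nhdsWithin_iff.mpr ⟨?_, ?_⟩)
  · exact ((continuous_const_mul (2 : ℂ)).tendsto' _ _ (by norm_num)).mono_left nhdsWithin_le_nhds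
  · filter_upwards [self_mem_nhdsWithin] with s (hs : s ≠ 1 / 2) (h : 2 * s = 1)
    exact hs (by linear_combination h / 2)

lemma continuousAt_neg_deriv_riemannZeta_div {s : ℂ} (hs : s ≠ 1) (hζ : riemannZeta s ≠ 0) :
    ContinuousAt (fun z ↦ -deriv riemannZeta z / riemannZeta z) s :=
  have han : AnalyticAt ℂ riemannZeta s :=
    differentiableOn_riemannZeta.analyticOnNhd isOpen_compl_singleton s hs
  han.deriv.continuousAt.neg.div han.continuousAt hζ

lemma tendsto_ofReal_nhdsGT (x : ℝ) : Tendsto ofReal (𝓝[>] x) (𝓝[{s | x < s.re}] x) :=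
  continuous_ofReal.continuousWithinAt.tendsto_nhdsWithin fun _ hy ↦ hy

theorem stmt_8_general :
    (∀ a : ℝ, 0 < a → a ≠ 1 → riemannZeta a ≠ 0) ∧
    (∀ s : ℂ, 1 / 2 < s.re →
      Summable fun q : {m : ℕ // 2 ≤ m} × Nat.Primes ↦ ‖primePowTerm s q.1 q.2‖) ∧
    Tendsto (fun s : ℂ ↦ -deriv riemannZeta s / riemannZeta s
        - ∑' q : {m : ℕ // 2 ≤ m} × Nat.Primes, primePowTerm s q.1 q.2 + 1 / (2 * s - 1))
      (𝓝[{s | 1 / 2 < s.re}] (1 / 2))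
      (𝓝 (-deriv riemannZeta (1 / 2) / riemannZeta (1 / 2) - oddPrimePowSum (1 / 2)
        + Real.eulerMascheroniConstant)) := by
  refine ⟨fun a ↦ riemannZeta_ofReal_ne_zero,
    fun s hs ↦ (hasSum_primePowTerm_two_le hs).summable.norm, ?_⟩
  have hζ : riemannZeta (1 / 2) ≠ 0 := by
    simpa using riemannZeta_ofReal_ne_zero (a := 1 / 2) (by norm_num) (by norm_num)
  have hlogDeriv := (continuousAt_neg_deriv_riemannZeta_div (by norm_num) hζ).tendsto
  have hodd := (continuousAt_oddPrimePowSum (s := 1 / 2) (by norm_num)).tendsto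
  have hpole : Tendsto _ (𝓝[{s : ℂ | 1 / 2 < s.re}] (1 / 2)) _ :=
    tendsto_logDeriv_riemannZeta_two_mul_add.mono_left
      (nhdsWithin_mono _ (by rintro _ hs rfl; simp at hs))
  refine (((hlogDeriv.sub hodd).mono_left nhdsWithin_le_nhds).add hpole).congr' ?_
  filter_upwards [self_mem_nhdsWithin] with s hs
  rw [(hasSum_primePowTerm_two_le hs).tsum_eq]
  ring

/-- The limit as a → (1/2)⁺ of −ζ'(a)/ζ(a) − ∑_{m≥2} ∑_p (log p)·p^{−ma} + 1/(2a−1)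
exists and is finite; moreover for 1/2 < a < 1 one has ζ(a) ≠ 0 and the double series
converges absolutely. -/
theorem stmt_8 :
    (∀ a : ℝ, 1 / 2 < a → a < 1 →
      riemannZeta (a : ℂ) ≠ 0 ∧
      Summable (fun q : {m : ℕ // 2 ≤ m} × Nat.Primes =>
        |Real.log ((q.2 : ℕ) : ℝ) * ((q.2 : ℕ) : ℝ) ^ (-((q.1 : ℕ) : ℝ) * a)|)) ∧
    ∃ L : ℂ,
      Tendsto (fun a : ℝ =>
          -deriv riemannZeta (a : ℂ) / riemannZeta (a : ℂ)
            - ((∑' q : {m : ℕ // 2 ≤ m} × Nat.Primes,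
                Real.log ((q.2 : ℕ) : ℝ) * ((q.2 : ℕ) : ℝ) ^ (-((q.1 : ℕ) : ℝ) * a) : ℝ) : ℂ)
            + 1 / (2 * (a : ℂ) - 1))
        (𝓝[>] (1 / 2 : ℝ)) (𝓝 L) := by
  obtain ⟨hζ, hsum, hlim⟩ := stmt_8_general
  have hofReal : Tendsto ofReal (𝓝[>] (1 / 2)) (𝓝[{s | 1 / 2 < s.re}] (1 / 2)) := by
    simpa using tendsto_ofReal_nhdsGT (1 / 2)
  have hlim_real := hlim.comp hofReal
  simp only [Function.comp_def, primePowTerm_ofReal, ← ofReal_tsum] at hlim_real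
  refine ⟨fun a ha ha1 ↦ ⟨hζ a (by linarith) ha1.ne, ?_⟩, _, hlim_real⟩
  simpa only [primePowTerm_ofReal, norm_real, Real.norm_eq_abs] using hsum a ha
end

section
/- For every real a > 1 and every real λ < 0, lim_{T→∞} (1/(2π))·∫_{−T}^{T} g₁(a+it)·e^{−λ(a+it)} dt = e^{−λ/2}·Φ(e^{2λ}), where g₁(z) = ∫_{−∞}^{0} Φ(e^{2μ})·e^{μ(z−1/2)} dμ (this integral converges absolutely for Re z > 1). -/
open Complex Filter Topology MeasureTheory Set

noncomputable def gOne (z : ℂ) : ℂ :=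
  ∫ μ in Set.Iio (0 : ℝ),
    (bigPhi (Real.exp (2 * μ)) : ℂ) * Complex.exp ((μ : ℂ) * (z - 1 / 2))

/-!
Writing `D μ = e^{-μ/2} Φ(e^{2μ}) = 2 φ(e^{2μ}) - e^{-μ}`, the function `g₁` is the Laplace
transform of `D` over `μ < 0`, so the claim is Laplace inversion at the point `l < 0`. The transform
of the truncated density need not be integrable along a vertical line because of the jump at `0`, so
pointwise inversion is obtained from Dini's criterion. After translating the point to `0` and
subtracting a Gaussian, for which inversion is explicit, one may assume `f 0 = 0`; then
`𝓕 f` is, up to a constant, the derivative of the Fourier transform of the integrable function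
`f u / u`, and the Riemann–Lebesgue lemma applies. Integrability of `D` against `e^{μ z}` comes
from `φ(x) = O(x^{-s})` for every `1/2 < s ≤ 1`, and differentiability of `D` from that of
exponential series.
-/

section FourierInversion

open scoped FourierTransform

variable {E : Type*} [NormedAddCommGroup E]

lemma integrableAtFilter_slope_of_differentiableAt [NormedSpace ℝ E] {f : ℝ → E} {x : ℝ}
    (hf : AEStronglyMeasurable f) (hd : DifferentiableAt ℝ f x) :
    IntegrableAtFilter (slope f x) (𝓝 x) := by
  have hmeas : AEStronglyMeasurable (slope f x) :=
    (by fun_prop : Measurable fun u : ℝ ↦ (u - x)⁻¹).aestronglyMeasurable.smul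
      (hf.sub aestronglyMeasurable_const)
  have hle : 𝓝 x ⊓ ae volume ≤ 𝓝[≠] x :=
    inf_le_inf_left _ <| le_principal_iff.2 <| compl_mem_ae_iff.2 (measure_singleton x)
  exact (hasDerivAt_iff_tendsto_slope.1 hd.hasDerivAt).mono_left hle |>.integrableAtFilter_ae
    hmeas.stronglyMeasurableAtFilter (volume.finiteAt_nhds x)

lemma integrable_inv_smul_of_integrableAtFilter [NormedSpace ℝ E] {f : ℝ → E}
    (hf : Integrable f) (h0 : IntegrableAtFilter (fun u ↦ u⁻¹ • f u) (𝓝 0)) :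
    Integrable fun u ↦ u⁻¹ • f u := by
  obtain ⟨s, hs, hint⟩ := h0
  obtain ⟨δ, hδ, hball⟩ := Metric.mem_nhds_iff.1 hs
  rw [← integrableOn_univ, ← union_compl_self (Metric.ball (0 : ℝ) δ)]
  refine (hint.mono_set hball).union ?_
  refine hf.integrableOn.bdd_smul δ⁻¹ measurable_inv.aestronglyMeasurable ?_
  refine (ae_restrict_iff' Metric.isOpen_ball.measurableSet.compl).2 (ae_of_all _ fun u hu ↦ ?_)
  have : δ ≤ ‖u‖ := by simpa using hu
  simpa only [norm_inv] using inv_anti₀ hδ this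

variable [NormedSpace ℂ E]

section InnerProductSpace

variable {V : Type*} [NormedAddCommGroup V] [InnerProductSpace ℝ V] [MeasurableSpace V]
  [BorelSpace V] [FiniteDimensional ℝ V]

lemma continuous_fourier_of_integrable {f : V → E} (hf : Integrable f) : Continuous (𝓕 f) :=
  VectorFourier.fourierIntegral_continuous Real.continuous_fourierChar continuous_inner hf

lemma fourier_add_of_integrable {f g : V → E} (hf : Integrable f) (hg : Integrable g) :
    𝓕 (f + g) = 𝓕 f + 𝓕 g :=
  VectorFourier.fourierIntegral_add Real.continuous_fourierChar continuous_inner hf hg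

end InnerProductSpace

lemma fourier_comp_add_right (f : ℝ → E) (x ξ : ℝ) :
    𝓕 (f ∘ (· + x)) ξ = 𝐞 (ξ * x) • 𝓕 f ξ :=
  congrFun (VectorFourier.fourierIntegral_comp_add_right 𝐞 volume (innerₗ ℝ) f x) ξ

lemma integrable_gaussian_smul (c : E) :
    Integrable fun u : ℝ ↦ cexp (-Real.pi * u ^ 2) • c :=
  (integrable_cexp_neg_mul_sq (by simpa using Real.pi_pos)).smul_const c

lemma exp_smul_setIntegral_exp_smul_eq_fourier {s : Set ℝ} (hs : MeasurableSet s) (h : ℝ → E)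
    (a : ℂ) (x t : ℝ) :
    cexp (-x * (a + I * t)) • ∫ u in s, cexp (u * (a + I * t)) • h u =
      𝐞 (-(2 * Real.pi)⁻¹ * t * x) •
        𝓕 (s.indicator fun u : ℝ ↦ cexp ((u - x) * a) • h u) (-(2 * Real.pi)⁻¹ * t) := by
  simp_rw [Circle.smul_def, Real.fourier_real_eq, Circle.smul_def, Real.fourierChar_apply,
    ← integral_smul, ← integral_indicator hs]
  congr 1 with u
  by_cases hu : u ∈ s
  · simp only [indicator_of_mem hu, smul_smul, ← Complex.exp_add]
    congr 2
    push_cast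
    field_simp
    ring
  · simp only [indicator_of_notMem hu, smul_zero]

variable [CompleteSpace E]

lemma tendsto_integral_fourier_of_integrable_inv_smul {f : ℝ → E} (hf : Integrable f)
    (hK : Integrable fun u ↦ u⁻¹ • f u) :
    Tendsto (fun T : ℝ ↦ ∫ ξ in -T..T, 𝓕 f ξ) atTop (𝓝 0) := by
  set K : ℝ → E := fun u ↦ (-2 * Real.pi * I)⁻¹ • u⁻¹ • f u
  have hKint : Integrable K := hK.smul _
  have hf_eq : (fun u : ℝ ↦ (-2 * Real.pi * I * u) • K u) =ᵐ[volume] f := by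
    filter_upwards [compl_mem_ae_iff.2 (measure_singleton (0 : ℝ))] with u hu
    have hu' : (u : ℂ) ≠ 0 := ofReal_ne_zero.2 hu
    simp only [K, ← coe_smul, smul_smul, ofReal_inv]
    field_simp
    simp
  have huK : Integrable fun u ↦ u • K u := by
    refine (hf.smul (-2 * Real.pi * I : ℂ)⁻¹).congr (hf_eq.mono fun u hu ↦ ?_)
    simp only [Pi.smul_apply, ← hu, ← coe_smul, smul_smul]
    field_simp
  have hderiv (ξ : ℝ) : HasDerivAt (𝓕 K) (𝓕 f ξ) ξ := by
    rw [← Real.fourier_congr_ae hf_eq]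
    exact Real.hasDerivAt_fourier hKint huK ξ
  have hlim := Real.zero_at_infty_fourier K
  have := (hlim.comp (tendsto_id.mono_right atTop_le_cocompact)).sub
    (hlim.comp (tendsto_neg_atTop_atBot.mono_right atBot_le_cocompact))
  rw [sub_zero] at this
  refine this.congr fun T ↦ ?_
  exact (intervalIntegral.integral_eq_sub_of_hasDerivAt (fun ξ _ ↦ hderiv ξ)
    ((continuous_fourier_of_integrable hf).intervalIntegrable _ _)).symm

lemma fourier_gaussian_smul (c : E) :
    𝓕 (fun u : ℝ ↦ cexp (-Real.pi * u ^ 2) • c) = fun ξ : ℝ ↦ cexp (-Real.pi * ξ ^ 2) • c := by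
  ext ξ
  have h := congrFun (fourier_gaussian_pi (b := 1) (by simp)) ξ
  simp only [mul_one, one_cpow, div_one, one_mul, Real.fourier_real_eq, Circle.smul_def] at h ⊢
  simp_rw [← h, ← smul_assoc, integral_smul_const]

lemma tendsto_integral_fourier_gaussian_smul (c : E) :
    Tendsto (fun T : ℝ ↦ ∫ ξ in -T..T, 𝓕 (fun u : ℝ ↦ cexp (-Real.pi * u ^ 2) • c) ξ) atTop
      (𝓝 c) := by
  have h := intervalIntegral_tendsto_integral (integrable_gaussian_smul c)
    tendsto_neg_atTop_atBot tendsto_id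
  rw [integral_smul_const, integral_gaussian_complex (by simpa using Real.pi_pos),
    div_self (by simp), one_cpow, one_smul] at h
  simpa only [fourier_gaussian_smul, id] using h

/-- Dini's criterion for the pointwise convergence of the Fourier inversion integral. -/
theorem tendsto_integral_fourier_of_integrableAtFilter_slope {f : ℝ → E} {x : ℝ}
    (hf : Integrable f) (hx : IntegrableAtFilter (slope f x) (𝓝 x)) :
    Tendsto (fun T : ℝ ↦ ∫ ξ in -T..T, 𝐞 (ξ * x) • 𝓕 f ξ) atTop (𝓝 (f x)) := by
  set G : ℝ → E := fun u ↦ cexp (-Real.pi * u ^ 2) • f x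
  have hG : Integrable G := integrable_gaussian_smul (f x)
  have hfx : Integrable (f ∘ (· + x)) := hf.comp_add_right x
  have hslope_translate : IntegrableAtFilter (slope f x ∘ (· + x)) (𝓝 0) := by
    obtain ⟨s, hs, hint⟩ := hx
    exact ⟨_, (continuous_add_const x).continuousAt.preimage_mem_nhds (by simpa using hs),
      ((measurePreserving_add_right volume x).integrableOn_comp_preimage
        (measurableEmbedding_addRight x)).2 hint⟩
  have hslope_gaussian : IntegrableAtFilter (slope G 0) (𝓝 0) :=
    integrableAtFilter_slope_of_differentiableAt hG.aestronglyMeasurable (by fun_prop)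
  have hquot : IntegrableAtFilter (fun u ↦ u⁻¹ • (f ∘ (· + x) - G) u) (𝓝 0) := by
    convert! hslope_translate.sub hslope_gaussian using 1
    ext u
    simp [slope, G, smul_sub]
  have hdiff := tendsto_integral_fourier_of_integrable_inv_smul (hfx.sub hG)
    (integrable_inv_smul_of_integrableAtFilter (hfx.sub hG) hquot)
  have hsum := hdiff.add (tendsto_integral_fourier_gaussian_smul (f x))
  rw [zero_add] at hsum
  refine hsum.congr fun T ↦ ?_
  rw [← intervalIntegral.integral_add
    ((continuous_fourier_of_integrable (hfx.sub hG)).intervalIntegrable _ _)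
    ((continuous_fourier_of_integrable hG).intervalIntegrable _ _)]
  simp_rw [← fourier_comp_add_right, ← Pi.add_apply,
    ← fourier_add_of_integrable (hfx.sub hG) hG, sub_add_cancel]

theorem tendsto_laplace_inversion {s : Set ℝ} {h : ℝ → E} {a : ℂ} {x : ℝ}
    (hs : MeasurableSet s) (hint : IntegrableOn (fun u : ℝ ↦ cexp (u * a) • h u) s)
    (hx : s ∈ 𝓝 x) (hd : DifferentiableAt ℝ h x) :
    Tendsto (fun T : ℝ ↦ (1 / (2 * Real.pi) : ℂ) • ∫ t in -T..T,
        cexp (-x * (a + I * t)) • ∫ u in s, cexp (u * (a + I * t)) • h u)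
      atTop (𝓝 (h x)) := by
  set f : ℝ → E := s.indicator fun u ↦ cexp ((u - x) * a) • h u
  have hf : Integrable f := by
    rw [integrable_indicator_iff hs]
    refine (hint.smul (cexp (-x * a))).congr (ae_of_all _ fun u ↦ ?_)
    simp only [Pi.smul_apply, smul_smul, ← Complex.exp_add]
    ring_nf
  have hfx : f x = h x := by simp [f, mem_of_mem_nhds hx]
  have hfd : DifferentiableAt ℝ f x := by
    have : DifferentiableAt ℝ (fun u : ℝ ↦ cexp ((u - x) * a) • h u) x := by fun_prop
    exact this.congr_of_eventuallyEq (eventually_of_mem hx fun u hu ↦ indicator_of_mem hu _)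
  have hinv := tendsto_integral_fourier_of_integrableAtFilter_slope hf
    (integrableAtFilter_slope_of_differentiableAt hf.aestronglyMeasurable hfd)
  rw [hfx] at hinv
  refine (hinv.comp (tendsto_id.atTop_mul_const (r := (2 * Real.pi)⁻¹)
    (by positivity))).congr fun T ↦ ?_
  have hscale := intervalIntegral.smul_integral_comp_mul_left (a := -T) (b := T)
    (fun ξ ↦ 𝐞 (ξ * x) • 𝓕 f ξ) (-(2 * Real.pi)⁻¹)
  rw [intervalIntegral.integral_symm (_ * T), neg_smul, neg_inj] at hscale
  simp_rw [exp_smul_setIntegral_exp_smul_eq_fourier hs]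
  convert! hscale.symm using 1
  · simp [mul_comm]
  · simp [← coe_smul, f]

end FourierInversion

section ExponentialSeries

variable {ι : Type*} {c : ι → ℝ} {x₀ : ℝ}

lemma differentiableOn_tsum_mul_cexp {a : ι → ℂ} (hc : ∀ i, c i ≤ 0)
    (ha : Summable fun i ↦ ‖a i‖ * Real.exp (c i * x₀)) :
    DifferentiableOn ℂ (fun w ↦ ∑' i, a i * cexp (c i * w)) {w | x₀ < w.re} := by
  refine differentiableOn_tsum_of_summable_norm ha (fun i ↦ by fun_prop)
    (isOpen_lt continuous_const continuous_re) fun i w hw ↦ ?_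
  rw [norm_mul, Complex.norm_exp, re_ofReal_mul]
  gcongr ‖a i‖ * Real.exp ?_
  exact mul_le_mul_of_nonpos_left (le_of_lt hw) (hc i)

lemma differentiableAt_tsum_mul_exp {a : ι → ℝ} (hc : ∀ i, c i ≤ 0)
    (ha : Summable fun i ↦ a i * Real.exp (c i * x₀)) {x : ℝ} (hx : x₀ < x) :
    DifferentiableAt ℝ (fun x ↦ ∑' i, a i * Real.exp (c i * x)) x := by
  have hnorm : Summable fun i ↦ ‖(a i : ℂ)‖ * Real.exp (c i * x₀) := by
    simpa only [norm_mul, Real.norm_of_nonneg (Real.exp_nonneg _), norm_real] using ha.norm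
  have hd := (differentiableOn_tsum_mul_cexp hc hnorm).differentiableAt (x := (x : ℂ))
    ((isOpen_lt continuous_const continuous_re).mem_nhds hx)
  convert! hd.hasDerivAt.real_of_complex.differentiableAt using 2
  rw [← ofReal_re (∑' i, a i * Real.exp (c i * _))]
  push_cast
  rfl

end ExponentialSeries

lemma exp_neg_le_rpow_neg {y s : ℝ} (hy : 0 < y) (hs : s ∈ Icc 0 1) :
    Real.exp (-y) ≤ y ^ (-s) := by
  rw [Real.exp_neg, Real.rpow_neg hy.le]
  refine inv_anti₀ (Real.rpow_pos_of_pos hy s) ?_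
  calc y ^ s ≤ Real.exp y ^ s :=
        Real.rpow_le_rpow hy.le (by linarith [Real.add_one_le_exp y]) hs.1
    _ = Real.exp (y * s) := (Real.exp_mul y s).symm
    _ ≤ Real.exp y := Real.exp_le_exp.2 (mul_le_of_le_one_right hy.le hs.2)

lemma summable_primes_log_mul_rpow_neg {r : ℝ} (hr : 1 < r) :
    Summable fun p : Nat.Primes ↦ Real.log p * (p : ℝ) ^ (-r) := by
  have h := (ArithmeticFunction.LSeriesSummable_vonMangoldt (s := r) (by simpa)).norm
  refine (h.comp_injective (i := ((↑) : Nat.Primes → ℕ)) Subtype.val_injective).congr fun p ↦ ?_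
  simp [LSeries.norm_term_eq, p.2.ne_zero, ArithmeticFunction.vonMangoldt_apply_prime p.2,
    Real.rpow_neg, div_eq_mul_inv, Real.log_natCast_nonneg]

lemma log_mul_exp_nonneg (p : Nat.Primes) (c : ℝ) : 0 ≤ Real.log p * Real.exp c :=
  mul_nonneg (Real.log_natCast_nonneg _) (Real.exp_nonneg _)

lemma log_mul_exp_neg_sq_le {s x : ℝ} (hs : s ∈ Icc 0 1) (hx : 0 < x) (p : Nat.Primes) :
    Real.log p * Real.exp (-(p : ℝ) ^ 2 * Real.pi * x) ≤
      Real.log p * (p : ℝ) ^ (-(2 * s)) * (Real.pi * x) ^ (-s) := by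
  have hp : (0 : ℝ) < p := mod_cast p.2.pos
  rw [mul_assoc (Real.log p)]
  refine mul_le_mul_of_nonneg_left ?_ (Real.log_natCast_nonneg _)
  have hpx : 0 < Real.pi * x := mul_pos Real.pi_pos hx
  calc Real.exp (-(p : ℝ) ^ 2 * Real.pi * x)
      = Real.exp (-((p : ℝ) ^ 2 * (Real.pi * x))) := by ring_nf
    _ ≤ ((p : ℝ) ^ 2 * (Real.pi * x)) ^ (-s) := exp_neg_le_rpow_neg (by positivity) hs
    _ = (p : ℝ) ^ (-(2 * s)) * (Real.pi * x) ^ (-s) := by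
      rw [Real.mul_rpow (by positivity) hpx.le, ← Real.rpow_natCast_mul hp.le]
      norm_num

lemma summable_primePhi {x : ℝ} (hx : 0 < x) :
    Summable fun p : Nat.Primes ↦ Real.log p * Real.exp (-(p : ℝ) ^ 2 * Real.pi * x) :=
  .of_nonneg_of_le (fun p ↦ log_mul_exp_nonneg p _)
    (log_mul_exp_neg_sq_le (right_mem_Icc.2 zero_le_one) hx)
    ((summable_primes_log_mul_rpow_neg (by norm_num)).mul_right _)

lemma primePhi_nonneg (x : ℝ) : 0 ≤ primePhi x := tsum_nonneg fun p ↦ log_mul_exp_nonneg p _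

lemma exists_primePhi_le_mul_rpow_neg {s : ℝ} (hs : s ∈ Ioc (1 / 2) 1) :
    ∃ C, ∀ x, 0 < x → primePhi x ≤ C * x ^ (-s) := by
  have hsum : Summable fun p : Nat.Primes ↦ Real.log p * (p : ℝ) ^ (-(2 * s)) :=
    summable_primes_log_mul_rpow_neg (by linarith [hs.1])
  refine ⟨(∑' p : Nat.Primes, Real.log p * (p : ℝ) ^ (-(2 * s))) * Real.pi ^ (-s),
    fun x hx ↦ ?_⟩
  rw [mul_assoc, ← Real.mul_rpow Real.pi_pos.le hx.le, ← tsum_mul_right]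
  exact (summable_primePhi hx).tsum_le_tsum
    (log_mul_exp_neg_sq_le ⟨one_half_pos.le.trans hs.1.le, hs.2⟩ hx) (hsum.mul_right _)

lemma differentiableAt_primePhi {x : ℝ} (hx : 0 < x) : DifferentiableAt ℝ primePhi x :=
  differentiableAt_tsum_mul_exp (c := fun p : Nat.Primes ↦ -(p : ℝ) ^ 2 * Real.pi)
    (fun p ↦ by rw [neg_mul]; exact neg_nonpos.2 (by positivity))
    (summable_primePhi (half_pos hx)) (half_lt_self hx)

/-- The function `e^{-μ/2} Φ(e^{2μ})`, whose Laplace transform over `μ < 0` is `g₁`. -/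
noncomputable def gOneDensity (μ : ℝ) : ℝ := 2 * primePhi (Real.exp (2 * μ)) - Real.exp (-μ)

lemma exp_mul_bigPhi_exp (μ : ℝ) :
    Real.exp (-μ / 2) * bigPhi (Real.exp (2 * μ)) = gOneDensity μ := by
  have hsqrt : √(Real.exp (2 * μ)) = Real.exp μ := by
    rw [← Real.exp_half]
    ring_nf
  have hroot : Real.exp (2 * μ) ^ (1 / 4 : ℝ) = Real.exp (μ / 2) := by
    rw [← Real.exp_mul]
    ring_nf
  have hsq : Real.exp μ = Real.exp (μ / 2) ^ 2 := by
    rw [← Real.exp_nat_mul]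
    ring_nf
  rw [bigPhi, hsqrt, hroot, gOneDensity, neg_div, Real.exp_neg, Real.exp_neg, hsq]
  field_simp

lemma bigPhi_exp_mul_cexp (z : ℂ) (μ : ℝ) :
    (bigPhi (Real.exp (2 * μ)) : ℂ) * cexp (μ * (z - 1 / 2)) =
      cexp (μ * z) • (gOneDensity μ : ℂ) := by
  have hexp : cexp (μ * (z - 1 / 2)) = cexp (μ * z) * cexp (-μ / 2) := by
    rw [← Complex.exp_add]
    ring_nf
  rw [hexp, ← exp_mul_bigPhi_exp, smul_eq_mul]
  push_cast
  ring

lemma gOne_eq (z : ℂ) : gOne z = ∫ μ in Iio (0 : ℝ), cexp (μ * z) • (gOneDensity μ : ℂ) := by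
  simp_rw [gOne, bigPhi_exp_mul_cexp]

lemma differentiable_gOneDensity : Differentiable ℝ gOneDensity := fun μ ↦ by
  have : DifferentiableAt ℝ (fun μ ↦ primePhi (Real.exp (2 * μ))) μ :=
    (differentiableAt_primePhi (Real.exp_pos (2 * μ))).comp
      (f := fun μ ↦ Real.exp (2 * μ)) μ (by fun_prop)
  unfold gOneDensity
  fun_prop

lemma exists_abs_gOneDensity_le {s : ℝ} (hs : s ∈ Ioc (1 / 2) 1) :
    ∃ C, ∀ μ, |gOneDensity μ| ≤ C * Real.exp (-(2 * s) * μ) + Real.exp (-μ) := by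
  obtain ⟨C, hC⟩ := exists_primePhi_le_mul_rpow_neg hs
  refine ⟨2 * C, fun μ ↦ ?_⟩
  have hφ : primePhi (Real.exp (2 * μ)) ≤ C * Real.exp (-(2 * s) * μ) := by
    refine (hC _ (Real.exp_pos _)).trans_eq ?_
    rw [← Real.exp_mul]
    ring_nf
  calc |gOneDensity μ| ≤ |2 * primePhi (Real.exp (2 * μ))| + |Real.exp (-μ)| := abs_sub _ _
    _ = 2 * primePhi (Real.exp (2 * μ)) + Real.exp (-μ) := by
      rw [abs_of_nonneg (mul_nonneg zero_le_two (primePhi_nonneg _)), Real.abs_exp]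
    _ ≤ 2 * C * Real.exp (-(2 * s) * μ) + Real.exp (-μ) := by linarith

lemma integrableOn_cexp_smul_gOneDensity {z : ℂ} (hz : 1 < z.re) :
    IntegrableOn (fun μ : ℝ ↦ cexp (μ * z) • (gOneDensity μ : ℂ)) (Iio 0) := by
  obtain ⟨r, hr, hr_lt⟩ := exists_between (lt_min hz one_lt_two)
  obtain ⟨hrz, hr2⟩ := lt_min_iff.1 hr_lt
  obtain ⟨C, hC⟩ := exists_abs_gOneDensity_le (s := r / 2) ⟨by linarith, by linarith⟩
  have hexp {b : ℝ} (hb : 0 < b) : IntegrableOn (fun μ ↦ Real.exp (b * μ)) (Iio 0) :=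
    (integrableOn_exp_mul_Iic hb 0).mono_set Iio_subset_Iic_self
  have hdom := ((hexp (sub_pos.2 hrz)).const_mul C).add (hexp (sub_pos.2 hz))
  have hcont : Continuous fun μ : ℝ ↦ cexp (μ * z) • (gOneDensity μ : ℂ) := by
    have := differentiable_gOneDensity.continuous
    fun_prop
  refine hdom.mono' hcont.aestronglyMeasurable (ae_of_all _ fun μ ↦ ?_)
  calc ‖cexp (μ * z) • (gOneDensity μ : ℂ)‖ = Real.exp (z.re * μ) * |gOneDensity μ| := by
        rw [norm_smul, norm_exp, re_ofReal_mul, norm_real, Real.norm_eq_abs, mul_comm μ]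
    _ ≤ Real.exp (z.re * μ) * (C * Real.exp (-(2 * (r / 2)) * μ) + Real.exp (-μ)) := by
        gcongr
        exact hC μ
    _ = C * Real.exp ((z.re - r) * μ) + Real.exp ((z.re - 1) * μ) := by
        rw [mul_add, mul_left_comm, ← Real.exp_add, ← Real.exp_add]
        ring_nf

/-- For real a > 1 and real λ < 0,
lim_{T→∞} (1/(2π))·∫_{−T}^{T} g₁(a+it)·e^{−λ(a+it)} dt = e^{−λ/2}·Φ(e^{2λ}),
where the integral defining g₁ converges absolutely for Re z > 1. -/
theorem stmt_12 (a : ℝ) (ha : 1 < a) (l : ℝ) (hl : l < 0) :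
    (∀ z : ℂ, 1 < z.re →
      MeasureTheory.IntegrableOn (fun μ : ℝ =>
          (bigPhi (Real.exp (2 * μ)) : ℂ) * Complex.exp ((μ : ℂ) * (z - 1 / 2)))
        (Set.Iio (0 : ℝ)) MeasureTheory.volume) ∧
    Tendsto (fun T : ℝ =>
        (1 / (2 * Real.pi) : ℂ) *
          ∫ t in (-T)..T,
            gOne ((a : ℂ) + Complex.I * t)
              * Complex.exp (-(l : ℂ) * ((a : ℂ) + Complex.I * t)))
      atTop (𝓝 ((Real.exp (-l / 2) * bigPhi (Real.exp (2 * l)) : ℝ) : ℂ)) := by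
  refine ⟨fun z hz ↦ ?_, ?_⟩
  · simpa only [bigPhi_exp_mul_cexp] using integrableOn_cexp_smul_gOneDensity hz
  · have hdiff : DifferentiableAt ℝ (fun μ ↦ (gOneDensity μ : ℂ)) l :=
      ofRealCLM.differentiableAt.comp l (differentiable_gOneDensity l)
    have hint := integrableOn_cexp_smul_gOneDensity (z := a) ha
    rw [exp_mul_bigPhi_exp]
    simp_rw [mul_comm (gOne _), gOne_eq]
    exact tendsto_laplace_inversion measurableSet_Iio hint (Iio_mem_nhds hl) hdiff
end

section
/- lim_{x→0⁺} 2√x·∑_p (log p)·e^{−p²πx} = 1, the sum ranging over all prime numbers p; equivalently, 2√x·φ(x) − 1 = o(1) as x → 0⁺. -/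
open Complex Filter Topology

/-!
This is a smoothed Wiener–Ikehara argument. For a band-limited Schwartz function `f`, the
logarithmic convolution `∑ aₙ / n · f (y - log n)` is the inverse Fourier transform of `𝓕 f` against
the L-series of `a` on the line `Re s = 1`: the pole at `1` contributes the residue times `∫ f`, and
the continuous remainder tends to `0` as `y → ∞` by the Riemann–Lebesgue lemma. A Chebyshev bound on
the coefficients makes the convolution continuous in `f`, uniformly in `y`, so density extends the
limit to all Schwartz functions. The substitution `u = exp (-v)` turns this into the asymptotics of
`x ∑ aₙ g (x n)` as `x → 0⁺`; the theorem is the case where `a` is `log p` on primes and `g` is the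
Gaussian `exp (-π u²)`, evaluated at `√x`.
-/

open MeasureTheory SchwartzMap Set
open scoped ContDiff FourierTransform

section SchwartzSpace

variable {E F : Type*} [NormedAddCommGroup E] [NormedSpace ℝ E] [NormedAddCommGroup F]
  [NormedSpace ℝ F]

/-- The Schwartz function given by a member of a set `𝒜` of rapidly decreasing functions on `ℝ`
that is stable under differentiation. -/
def schwartzMapOfDerivMem {𝒜 : Set (ℝ → F)} (hdiff : ∀ f ∈ 𝒜, Differentiable ℝ f)
    (hderiv : ∀ f ∈ 𝒜, deriv f ∈ 𝒜) (hdecay : ∀ f ∈ 𝒜, ∀ k : ℕ, ∃ C, ∀ x, |x| ^ k * ‖f x‖ ≤ C)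
    (f : ℝ → F) (hf : f ∈ 𝒜) : 𝓢(ℝ, F) where
  toFun := f
  smooth' := contDiff_of_differentiable_iteratedDeriv fun n _ ↦ hdiff _ <| by
    rw [iteratedDeriv_eq_iterate]
    exact MapsTo.iterate hderiv n hf
  decay' k n := by
    simp only [norm_iteratedFDeriv_eq_norm_iteratedDeriv, iteratedDeriv_eq_iterate]
    exact hdecay _ (MapsTo.iterate hderiv n hf) k

lemma exists_norm_iteratedFDeriv_contDiffBump_sub_one_le [FiniteDimensional ℝ E]
    (χ : ContDiffBump (0 : E)) (n : ℕ) :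
    ∃ M, ∀ x, ‖iteratedFDeriv ℝ n (fun x ↦ χ x - 1) x‖ ≤ M * ‖x‖ := by
  obtain ⟨M, hM⟩ : ∃ M, ∀ x, ‖iteratedFDeriv ℝ n χ x‖ ≤ M :=
    (χ.contDiff.continuous_iteratedFDeriv (by exact_mod_cast le_top)
      ).bounded_above_of_compact_support (χ.hasCompactSupport.iteratedFDeriv n)
  have hM0 : 0 ≤ M := (norm_nonneg _).trans (hM 0)
  refine ⟨(M + 1) / χ.rIn, fun x ↦ ?_⟩
  rcases lt_or_ge ‖x‖ χ.rIn with hx | hx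
  · have hχ : (fun x ↦ χ x - 1) =ᶠ[𝓝 x] fun _ ↦ 0 := by
      filter_upwards [Metric.isOpen_ball.mem_nhds (mem_ball_zero_iff.2 hx)] with z hz
      rw [χ.one_of_mem_closedBall (Metric.ball_subset_closedBall hz), sub_self]
    rw [(hχ.iteratedFDeriv ℝ n).self_of_nhds, iteratedFDeriv_fun_zero, Pi.zero_apply, norm_zero]
    have := χ.rIn_pos
    positivity
  · have hconst : ‖iteratedFDeriv ℝ n (fun _ : E ↦ (1 : ℝ)) x‖ ≤ 1 := by
      rcases n with _ | n
      · simp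
      · simp [iteratedFDeriv_const_of_ne]
    calc ‖iteratedFDeriv ℝ n (fun x ↦ χ x - 1) x‖
      _ ≤ M + 1 := by
        rw [fun_iteratedFDeriv_sub χ.contDiff contDiff_const]
        exact (norm_sub_le _ _).trans (add_le_add (hM x) hconst)
      _ ≤ (M + 1) / χ.rIn * ‖x‖ := by
        rw [div_mul_eq_mul_div, le_div_iff₀ χ.rIn_pos]
        gcongr

lemma exists_norm_iteratedFDeriv_dilated_contDiffBump_le [FiniteDimensional ℝ E]
    (χ : ContDiffBump (0 : E)) (n : ℕ) :
    ∃ M, 0 ≤ M ∧ ∀ c ∈ Icc (0 : ℝ) 1, ∀ x,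
      ‖iteratedFDeriv ℝ n (fun x ↦ χ (c • x) - 1) x‖ ≤ M * (c * ‖x‖) := by
  obtain ⟨M, hM⟩ := exists_norm_iteratedFDeriv_contDiffBump_sub_one_le χ n
  refine ⟨|M|, abs_nonneg M, fun c hc x ↦ ?_⟩
  rw [iteratedFDeriv_comp_const_smul (f := fun x ↦ χ x - 1) c (χ.contDiff.sub contDiff_const),
    norm_smul, norm_pow, Real.norm_of_nonneg hc.1]
  calc c ^ n * ‖iteratedFDeriv ℝ n (fun x ↦ χ x - 1) (c • x)‖
    _ ≤ 1 * (M * ‖c • x‖) := by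
      gcongr
      exacts [pow_le_one₀ hc.1 hc.2, hM _]
    _ ≤ |M| * (c * ‖x‖) := by
      rw [one_mul, norm_smul, Real.norm_of_nonneg hc.1]
      exact mul_le_mul_of_nonneg_right (le_abs_self M) (mul_nonneg hc.1 (norm_nonneg x))

lemma exists_pow_mul_norm_iteratedFDeriv_dilated_contDiffBump_smul_le
    [FiniteDimensional ℝ E] (χ : ContDiffBump (0 : E)) (h : 𝓢(E, F)) (k n : ℕ) :
    ∃ A, 0 ≤ A ∧ ∀ c ∈ Icc (0 : ℝ) 1, ∀ x,
      ‖x‖ ^ k * ‖iteratedFDeriv ℝ n (fun x ↦ (χ (c • x) - 1) • h x) x‖ ≤ c * A := by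
  choose M hM₀ hM using exists_norm_iteratedFDeriv_dilated_contDiffBump_le χ
  refine ⟨∑ i ∈ Finset.range (n + 1), n.choose i * M i * SchwartzMap.seminorm ℝ (k + 1) (n - i) h,
    Finset.sum_nonneg fun i _ ↦ by have := hM₀ i; positivity, fun c hc x ↦ ?_⟩
  have hχ : ContDiff ℝ ∞ fun x ↦ χ (c • x) - 1 :=
    (χ.contDiff.comp (contDiff_const_smul c)).sub contDiff_const
  refine (mul_le_mul_of_nonneg_left (norm_iteratedFDeriv_smul_le hχ h.smooth' x
    (by exact_mod_cast le_top)) (by positivity)).trans ?_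
  rw [Finset.mul_sum, Finset.mul_sum]
  refine Finset.sum_le_sum fun i _ ↦ ?_
  have := hM₀ i
  have := hc.1
  calc ‖x‖ ^ k * (n.choose i * ‖iteratedFDeriv ℝ i (fun x ↦ χ (c • x) - 1) x‖ *
          ‖iteratedFDeriv ℝ (n - i) h x‖)
    _ ≤ ‖x‖ ^ k * (n.choose i * (M i * (c * ‖x‖)) * ‖iteratedFDeriv ℝ (n - i) h x‖) := by
      gcongr
      exact hM i c hc x
    _ = c * (n.choose i * M i * (‖x‖ ^ (k + 1) * ‖iteratedFDeriv ℝ (n - i) h x‖)) := by ring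
    _ ≤ c * (n.choose i * M i * SchwartzMap.seminorm ℝ (k + 1) (n - i) h) := by
      gcongr
      exact SchwartzMap.le_seminorm ℝ (k + 1) (n - i) h x

lemma dense_setOf_hasCompactSupport_schwartzMap [FiniteDimensional ℝ E] :
    Dense {g : 𝓢(E, F) | HasCompactSupport g} := by
  intro h
  let χ : ContDiffBump (0 : E) := ⟨1, 2, one_pos, one_lt_two⟩
  let c (N : ℕ) : ℝ := 1 / (N + 1)
  have hc₀ (N : ℕ) : 0 < c N := by positivity
  have hc₁ (N : ℕ) : c N ≤ 1 := by
    rw [div_le_one (by positivity)]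
    linarith [N.cast_nonneg (α := ℝ)]
  have hcompact (N : ℕ) : HasCompactSupport fun x ↦ χ (c N • x) • h x :=
    (χ.hasCompactSupport.comp_homeomorph (Homeomorph.smulOfNeZero (c N) (hc₀ N).ne')).smul_right
  let g (N : ℕ) : 𝓢(E, F) := (hcompact N).toSchwartzMap
    ((χ.contDiff.comp (contDiff_const_smul (c N))).smul h.smooth')
  have hg : Tendsto g atTop (𝓝 h) := by
    rw [(schwartz_withSeminorms ℝ E F).tendsto_nhds]
    rintro ⟨k, n⟩ ε hε
    obtain ⟨A, hA₀, hA⟩ :=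
      exists_pow_mul_norm_iteratedFDeriv_dilated_contDiffBump_smul_le χ h k n
    have hlim : Tendsto (fun N ↦ c N * A) atTop (𝓝 0) := by
      simpa only [zero_mul] using tendsto_one_div_add_atTop_nhds_zero_nat.mul_const A
    filter_upwards [hlim.eventually_lt_const hε] with N hN
    refine (SchwartzMap.seminorm_le_bound ℝ k n _ (mul_nonneg (hc₀ N).le hA₀) fun x ↦
      ?_).trans_lt hN
    have hsub : ⇑(g N - h) = fun x ↦ (χ (c N • x) - 1) • h x := by
      ext x
      simp [g, sub_smul]
    rw [hsub]
    exact hA (c N) ⟨(hc₀ N).le, hc₁ N⟩ x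
  exact mem_closure_of_tendsto hg (Eventually.of_forall hcompact)

end SchwartzSpace

section Gaussian

lemma exists_pow_mul_exp_neg_mul_sq_le {a : ℝ} (ha : 0 < a) (k : ℕ) :
    ∃ C, ∀ x : ℝ, |x| ^ k * Real.exp (-a * x ^ 2) ≤ C := by
  refine ⟨k.factorial * Real.exp (1 / (4 * a)), fun x ↦ ?_⟩
  have hpow := Real.pow_div_factorial_le_exp |x| (abs_nonneg x) k
  rw [div_le_iff₀' (by positivity)] at hpow
  have hsq : |x| + -a * x ^ 2 ≤ 1 / (4 * a) := by
    rw [le_div_iff₀ (by positivity), ← sq_abs]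
    linarith [sq_nonneg (2 * a * |x| - 1)]
  calc |x| ^ k * Real.exp (-a * x ^ 2)
    _ ≤ k.factorial * Real.exp |x| * Real.exp (-a * x ^ 2) := by gcongr
    _ = k.factorial * Real.exp (|x| + -a * x ^ 2) := by rw [Real.exp_add, mul_assoc]
    _ ≤ k.factorial * Real.exp (1 / (4 * a)) := by gcongr

lemma exists_pow_mul_norm_eval_mul_cexp_neg_mul_sq_le {b : ℂ} (hb : 0 < b.re) (P : Polynomial ℂ)
    (k : ℕ) : ∃ C, ∀ x : ℝ, |x| ^ k * ‖P.eval (x : ℂ) * cexp (-b * x ^ 2)‖ ≤ C := by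
  induction P using Polynomial.induction_on' with
  | add P Q hP hQ =>
    obtain ⟨C, hC⟩ := hP
    obtain ⟨D, hD⟩ := hQ
    refine ⟨C + D, fun x ↦ ?_⟩
    rw [Polynomial.eval_add, add_mul]
    calc |x| ^ k * ‖P.eval (x : ℂ) * cexp (-b * x ^ 2) + Q.eval (x : ℂ) * cexp (-b * x ^ 2)‖
      _ ≤ |x| ^ k * ‖P.eval (x : ℂ) * cexp (-b * x ^ 2)‖ +
          |x| ^ k * ‖Q.eval (x : ℂ) * cexp (-b * x ^ 2)‖ := by
        rw [← mul_add]
        gcongr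
        exact norm_add_le _ _
      _ ≤ C + D := add_le_add (hC x) (hD x)
  | monomial m c =>
    obtain ⟨C, hC⟩ := exists_pow_mul_exp_neg_mul_sq_le hb (k + m)
    refine ⟨‖c‖ * C, fun x ↦ ?_⟩
    calc |x| ^ k * ‖(Polynomial.monomial m c).eval (x : ℂ) * cexp (-b * x ^ 2)‖
      _ = ‖c‖ * (|x| ^ (k + m) * Real.exp (-b.re * x ^ 2)) := by
        rw [Polynomial.eval_monomial, norm_mul, norm_mul, norm_pow, norm_cexp_neg_mul_sq,
          Complex.norm_real, Real.norm_eq_abs]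
        ring
      _ ≤ ‖c‖ * C := by
        gcongr
        exact hC x

lemma hasDerivAt_eval_mul_cexp_neg_mul_sq (b : ℂ) (P : Polynomial ℂ) (x : ℝ) :
    HasDerivAt (fun x : ℝ ↦ P.eval (x : ℂ) * cexp (-b * x ^ 2))
      ((P.derivative - Polynomial.C (2 * b) * Polynomial.X * P).eval (x : ℂ) *
        cexp (-b * x ^ 2)) x := by
  have hexp : HasDerivAt (fun z : ℂ ↦ cexp (-b * z ^ 2)) (cexp (-b * x ^ 2) * (-b * (2 * x)))
      x := by
    simpa using! ((hasDerivAt_pow 2 (x : ℂ)).const_mul (-b)).cexp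
  convert! ((P.hasDerivAt (x : ℂ)).mul hexp).comp_ofReal using 1
  simp only [Polynomial.eval_sub, Polynomial.eval_mul, Polynomial.eval_C, Polynomial.eval_X]
  ring

/-- The Gaussian `x ↦ exp (-b x²)` as a Schwartz function. -/
noncomputable def gaussianSchwartzMap (b : ℂ) (hb : 0 < b.re) : 𝓢(ℝ, ℂ) :=
  schwartzMapOfDerivMem
    (𝒜 := range fun (P : Polynomial ℂ) (x : ℝ) ↦ P.eval (x : ℂ) * cexp (-b * x ^ 2))
    (by
      rintro _ ⟨P, rfl⟩ x
      exact (hasDerivAt_eval_mul_cexp_neg_mul_sq b P x).differentiableAt)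
    (by
      rintro _ ⟨P, rfl⟩
      exact ⟨_, funext fun x ↦ (hasDerivAt_eval_mul_cexp_neg_mul_sq b P x).deriv.symm⟩)
    (by
      rintro _ ⟨P, rfl⟩ k
      exact exists_pow_mul_norm_eval_mul_cexp_neg_mul_sq_le hb P k)
    (fun x ↦ cexp (-b * x ^ 2)) ⟨1, by simp⟩

lemma gaussianSchwartzMap_apply (b : ℂ) (hb : 0 < b.re) (x : ℝ) :
    gaussianSchwartzMap b hb x = cexp (-b * x ^ 2) := rfl

end Gaussian

section LogPullback

lemma pow_mul_exp_neg_le_factorial {v : ℝ} (hv : 0 ≤ v) (k : ℕ) :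
    v ^ k * Real.exp (-v) ≤ k.factorial := by
  have hpow := Real.pow_div_factorial_le_exp v hv k
  rw [div_le_iff₀ (by positivity)] at hpow
  calc v ^ k * Real.exp (-v)
    _ ≤ Real.exp v * k.factorial * Real.exp (-v) := by gcongr
    _ = k.factorial := by
      rw [mul_right_comm, ← Real.exp_add, add_neg_cancel, Real.exp_zero, one_mul]

variable {F : Type*} [NormedAddCommGroup F] [NormedSpace ℝ F]

lemma pow_mul_norm_exp_neg_smul_le (g : 𝓢(ℝ, F)) (k : ℕ) (v : ℝ) :
    |v| ^ k * ‖Real.exp (-v) • g (Real.exp (-v))‖ ≤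
      k.factorial * (SchwartzMap.seminorm ℝ 0 0 g + SchwartzMap.seminorm ℝ 2 0 g) := by
  rw [norm_smul, Real.norm_of_nonneg (Real.exp_pos _).le]
  rcases le_total 0 v with hv | hv
  · calc |v| ^ k * (Real.exp (-v) * ‖g (Real.exp (-v))‖)
      _ = v ^ k * Real.exp (-v) * ‖g (Real.exp (-v))‖ := by rw [abs_of_nonneg hv, mul_assoc]
      _ ≤ k.factorial * SchwartzMap.seminorm ℝ 0 0 g := by
        gcongr
        exacts [pow_mul_exp_neg_le_factorial hv k, SchwartzMap.norm_le_seminorm ℝ g _]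
      _ ≤ k.factorial * (SchwartzMap.seminorm ℝ 0 0 g + SchwartzMap.seminorm ℝ 2 0 g) := by
        gcongr
        exact le_add_of_nonneg_right (apply_nonneg _ g)
  · calc |v| ^ k * (Real.exp (-v) * ‖g (Real.exp (-v))‖)
      _ = (-v) ^ k * Real.exp (- -v) * (‖Real.exp (-v)‖ ^ 2 * ‖g (Real.exp (-v))‖) := by
        rw [abs_of_nonpos hv, Real.norm_of_nonneg (Real.exp_pos _).le, Real.exp_neg (-v)]
        field_simp
      _ ≤ k.factorial * SchwartzMap.seminorm ℝ 2 0 g := by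
        gcongr
        exacts [pow_mul_exp_neg_le_factorial (neg_nonneg.2 hv) k,
          SchwartzMap.norm_pow_mul_le_seminorm ℝ g 2 _]
      _ ≤ k.factorial * (SchwartzMap.seminorm ℝ 0 0 g + SchwartzMap.seminorm ℝ 2 0 g) := by
        gcongr
        exact le_add_of_nonneg_left (apply_nonneg _ g)

lemma hasDerivAt_exp_neg (v : ℝ) : HasDerivAt (fun v ↦ Real.exp (-v)) (-Real.exp (-v)) v := by
  simpa using! (hasDerivAt_neg v).exp

lemma hasDerivAt_exp_neg_smul (g : 𝓢(ℝ, F)) (v : ℝ) :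
    HasDerivAt (fun v ↦ Real.exp (-v) • g (Real.exp (-v)))
      (Real.exp (-v) • (-(g + smulLeftCLM F (fun u : ℝ ↦ u) (derivCLM ℝ F g))) (Real.exp (-v)))
      v := by
  convert! (hasDerivAt_exp_neg v).smul
    (g.differentiableAt.hasDerivAt.scomp v (hasDerivAt_exp_neg v)) using 1
  simp only [neg_apply, add_apply, SchwartzMap.derivCLM_apply,
    SchwartzMap.smulLeftCLM_apply_apply Function.HasTemperateGrowth.id',
    Function.comp_apply]
  module

/-- The pullback `v ↦ e⁻ᵛ g(e⁻ᵛ)` of the density `g(u) du` on `(0, ∞)` along `u = e⁻ᵛ`, as a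
Schwartz function of `v`. -/
noncomputable def logPullback (g : 𝓢(ℝ, F)) : 𝓢(ℝ, F) :=
  schwartzMapOfDerivMem
    (𝒜 := range fun (g : 𝓢(ℝ, F)) (v : ℝ) ↦ Real.exp (-v) • g (Real.exp (-v)))
    (by
      rintro _ ⟨g, rfl⟩ v
      exact (hasDerivAt_exp_neg_smul g v).differentiableAt)
    (by
      rintro _ ⟨g, rfl⟩
      exact ⟨_, funext fun v ↦ (hasDerivAt_exp_neg_smul g v).deriv.symm⟩)
    (by
      rintro _ ⟨g, rfl⟩ k
      exact ⟨_, pow_mul_norm_exp_neg_smul_le g k⟩)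
    (fun v ↦ Real.exp (-v) • g (Real.exp (-v))) ⟨g, rfl⟩

lemma logPullback_apply (g : 𝓢(ℝ, F)) (v : ℝ) :
    logPullback g v = Real.exp (-v) • g (Real.exp (-v)) := rfl

lemma integral_logPullback (g : 𝓢(ℝ, F)) : ∫ v, logPullback g v = ∫ u in Ioi 0, g u := by
  have himage : (fun v : ℝ ↦ Real.exp (-v)) '' univ = Ioi 0 := by
    rw [image_univ, ← Real.range_exp]
    exact (Equiv.neg ℝ).surjective.range_comp Real.exp
  rw [← himage, integral_image_eq_integral_abs_deriv_smul MeasurableSet.univ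
    (f' := fun v ↦ -Real.exp (-v))]
  · simp only [Measure.restrict_univ, abs_neg, Real.abs_exp, logPullback_apply]
  · exact fun v _ ↦ (hasDerivAt_exp_neg v).hasDerivWithinAt
  · exact (Real.exp_injective.comp neg_injective).injOn

end LogPullback

section DecaySeminorm

/-- The Schwartz seminorm controlling decay of order `(1 + v²)⁻¹`. -/
noncomputable def decaySeminorm : Seminorm ℂ 𝓢(ℝ, ℂ) :=
  SchwartzMap.seminorm ℂ 0 0 + SchwartzMap.seminorm ℂ 2 0

lemma continuous_decaySeminorm : Continuous decaySeminorm :=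
  ((schwartz_withSeminorms ℂ ℝ ℂ).continuous_seminorm (0, 0)).add
    ((schwartz_withSeminorms ℂ ℝ ℂ).continuous_seminorm (2, 0))

lemma norm_le_decaySeminorm_mul (f : 𝓢(ℝ, ℂ)) (v : ℝ) :
    ‖f v‖ ≤ decaySeminorm f * (1 + v ^ 2)⁻¹ := by
  have h₀ := SchwartzMap.norm_le_seminorm ℂ f v
  have h₂ := SchwartzMap.norm_pow_mul_le_seminorm ℂ f 2 v
  rw [Real.norm_eq_abs, sq_abs] at h₂
  rw [← div_eq_mul_inv, le_div_iff₀ (by positivity), decaySeminorm, add_apply]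
  linarith

end DecaySeminorm

section ChebyshevBound

lemma inv_one_add_sq_le_of_abs_sub_le_one {u v : ℝ} (h : |u - v| ≤ 1) :
    (1 + u ^ 2)⁻¹ ≤ 3 * (1 + v ^ 2)⁻¹ := by
  have hsq : (u - v) ^ 2 ≤ 1 := (sq_le_one_iff_abs_le_one _).2 h
  rw [← div_eq_mul_inv, inv_eq_one_div, div_le_div_iff₀ (by positivity) (by positivity)]
  linarith [sq_nonneg u, sq_nonneg (u + (u - v))]

lemma summable_int_inv_one_add_sq : Summable fun j : ℤ ↦ (1 + (j : ℝ) ^ 2)⁻¹ := by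
  refine Summable.of_norm_bounded_eventually
    ((Real.summable_one_div_int_pow (p := 2)).2 one_lt_two) ?_
  filter_upwards [(finite_singleton (0 : ℤ)).compl_mem_cofinite] with j (hj : j ≠ 0)
  rw [Real.norm_of_nonneg (by positivity), one_div]
  gcongr
  exact le_add_of_nonneg_left zero_le_one

lemma sum_mul_inv_one_add_sq_le {ι : Type*} {w ℓ : ι → ℝ} {M : ℝ} (hw : ∀ i, 0 ≤ w i)
    (hM : ∀ (s : Finset ι) (k : ℤ), ∑ i ∈ s with ⌊ℓ i⌋ = k, w i ≤ M) (y : ℝ) (s : Finset ι) :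
    ∑ i ∈ s, w i * (1 + (y - ℓ i) ^ 2)⁻¹ ≤ M * (3 * ∑' j : ℤ, (1 + (j : ℝ) ^ 2)⁻¹) := by
  have hM₀ : 0 ≤ M := by simpa using hM ∅ 0
  have hround (i : ι) :
      (1 + (y - ℓ i) ^ 2)⁻¹ ≤ 3 * (1 + ((⌊y⌋ - ⌊ℓ i⌋ : ℤ) : ℝ) ^ 2)⁻¹ := by
    refine inv_one_add_sq_le_of_abs_sub_le_one ?_
    rw [abs_le]
    push_cast
    constructor <;>
      linarith [Int.floor_le y, Int.lt_floor_add_one y, Int.floor_le (ℓ i),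
        Int.lt_floor_add_one (ℓ i)]
  have hfiber (k : ℤ) : ∑ i ∈ s with ⌊ℓ i⌋ = k, w i * (1 + (y - ℓ i) ^ 2)⁻¹ ≤
      M * (3 * (1 + ((⌊y⌋ - k : ℤ) : ℝ) ^ 2)⁻¹) :=
    calc ∑ i ∈ s with ⌊ℓ i⌋ = k, w i * (1 + (y - ℓ i) ^ 2)⁻¹
      _ ≤ ∑ i ∈ s with ⌊ℓ i⌋ = k, w i * (3 * (1 + ((⌊y⌋ - k : ℤ) : ℝ) ^ 2)⁻¹) := by
        refine Finset.sum_le_sum fun i hi ↦ mul_le_mul_of_nonneg_left ?_ (hw i)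
        rw [← (Finset.mem_filter.1 hi).2]
        exact hround i
      _ ≤ M * (3 * (1 + ((⌊y⌋ - k : ℤ) : ℝ) ^ 2)⁻¹) := by
        rw [← Finset.sum_mul]
        gcongr
        exact hM s k
  have hsum : Summable fun k : ℤ ↦ (1 + ((⌊y⌋ - k : ℤ) : ℝ) ^ 2)⁻¹ :=
    (Equiv.subLeft ⌊y⌋).summable_iff.2 summable_int_inv_one_add_sq
  calc ∑ i ∈ s, w i * (1 + (y - ℓ i) ^ 2)⁻¹
    _ = ∑ k ∈ s.image (⌊ℓ ·⌋), ∑ i ∈ s with ⌊ℓ i⌋ = k, w i * (1 + (y - ℓ i) ^ 2)⁻¹ :=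
      (Finset.sum_fiberwise_of_maps_to (fun i hi ↦ Finset.mem_image_of_mem _ hi) _).symm
    _ ≤ ∑ k ∈ s.image (⌊ℓ ·⌋), M * (3 * (1 + ((⌊y⌋ - k : ℤ) : ℝ) ^ 2)⁻¹) :=
      Finset.sum_le_sum fun k _ ↦ hfiber k
    _ ≤ M * (3 * ∑' j : ℤ, (1 + (j : ℝ) ^ 2)⁻¹) := by
      rw [← Finset.mul_sum, ← Finset.mul_sum, ← (Equiv.subLeft ⌊y⌋).tsum_eq]
      gcongr
      exact hsum.sum_le_tsum _ fun k _ ↦ by positivity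

variable {a : ℕ → ℂ} {B : ℝ}

lemma lseriesSummable_of_sum_norm_le (ha : ∀ N : ℕ, ∑ n ∈ Finset.Icc 1 N, ‖a n‖ ≤ B * N) {s : ℂ}
    (hs : 1 < s.re) : LSeriesSummable a s := by
  refine LSeriesSummable_of_sum_norm_bigO (r := 1) ?_ zero_le_one hs
  refine Asymptotics.IsBigO.of_bound B (Eventually.of_forall fun N ↦ ?_)
  rw [Real.rpow_one, Real.norm_of_nonneg (by positivity), Real.norm_of_nonneg (by positivity)]
  exact ha N

lemma sum_norm_term_one_filter_floor_log_le
    (ha : ∀ N : ℕ, ∑ n ∈ Finset.Icc 1 N, ‖a n‖ ≤ B * N) (s : Finset ℕ) (k : ℤ) :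
    ∑ n ∈ s with ⌊Real.log (n : ℕ)⌋ = k, ‖LSeries.term a 1 n‖ ≤ B * Real.exp 1 := by
  have hB : 0 ≤ B := (norm_nonneg (a 1)).trans (by simpa using ha 1)
  have hterm : ∀ n ∈ s.filter (fun n : ℕ ↦ ⌊Real.log n⌋ = k), LSeries.term a 1 n ≠ 0 →
      n ∈ Finset.Icc 1 ⌊Real.exp (k + 1)⌋₊ ∧
        ‖LSeries.term a 1 n‖ ≤ Real.exp (-k) * ‖a n‖ := by
    intro n hn hne
    have hn₀ : n ≠ 0 := fun h ↦ hne (by rw [h, LSeries.term_zero])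
    have hpos : (0 : ℝ) < n := by positivity
    obtain ⟨hlow, hupp⟩ := Int.floor_eq_iff.1 (Finset.mem_filter.1 hn).2
    rw [Real.le_log_iff_exp_le hpos] at hlow
    rw [Real.log_lt_iff_lt_exp hpos] at hupp
    refine ⟨Finset.mem_Icc.2 ⟨Nat.one_le_iff_ne_zero.2 hn₀, Nat.le_floor hupp.le⟩, ?_⟩
    rw [LSeries.norm_term_eq, if_neg hn₀, Complex.one_re, Real.rpow_one, div_eq_inv_mul,
      Real.exp_neg]
    gcongr
  calc ∑ n ∈ s with ⌊Real.log (n : ℕ)⌋ = k, ‖LSeries.term a 1 n‖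
    _ ≤ ∑ n ∈ Finset.Icc 1 ⌊Real.exp (k + 1)⌋₊, Real.exp (-k) * ‖a n‖ := by
      rw [← Finset.sum_filter_ne_zero]
      refine (Finset.sum_le_sum fun n hn ↦ ?_).trans
        (Finset.sum_le_sum_of_subset_of_nonneg (fun n hn ↦ ?_) fun n _ _ ↦ by positivity) <;>
      rw [Finset.mem_filter, norm_ne_zero_iff] at hn
      exacts [(hterm n hn.1 hn.2).2, (hterm n hn.1 hn.2).1]
    _ ≤ Real.exp (-k) * (B * ⌊Real.exp (k + 1)⌋₊) := by
      rw [← Finset.mul_sum]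
      gcongr
      exact ha _
    _ ≤ Real.exp (-k) * (B * Real.exp (k + 1)) := by
      gcongr
      exact Nat.floor_le (Real.exp_pos _).le
    _ = B * Real.exp 1 := by
      rw [mul_left_comm, ← Real.exp_add, neg_add_cancel_left]

lemma exists_sum_norm_term_one_mul_inv_one_add_sq_le
    (ha : ∀ N : ℕ, ∑ n ∈ Finset.Icc 1 N, ‖a n‖ ≤ B * N) :
    ∃ C, ∀ (y : ℝ) (s : Finset ℕ),
      ∑ n ∈ s, ‖LSeries.term a 1 n‖ * (1 + (y - Real.log n) ^ 2)⁻¹ ≤ C :=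
  ⟨_, sum_mul_inv_one_add_sq_le (fun _ ↦ norm_nonneg _) (sum_norm_term_one_filter_floor_log_le ha)⟩

end ChebyshevBound

section LogConv

/-- The logarithmic convolution `∑ₙ a(n) n⁻ˢ f(y - log n)` of the coefficients of a Dirichlet
series with a function on `ℝ`. -/
noncomputable def logConv (a : ℕ → ℂ) (s : ℂ) (f : ℝ → ℂ) (y : ℝ) : ℂ :=
  ∑' n : ℕ, LSeries.term a s n * f (y - Real.log n)

variable {a : ℕ → ℂ} {B : ℝ}

lemma norm_term_mul_schwartzMap_le (a : ℕ → ℂ) (f : 𝓢(ℝ, ℂ)) (y : ℝ) (n : ℕ) :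
    ‖LSeries.term a 1 n * f (y - Real.log n)‖ ≤
      decaySeminorm f * (‖LSeries.term a 1 n‖ * (1 + (y - Real.log n) ^ 2)⁻¹) := by
  rw [norm_mul, mul_left_comm]
  gcongr
  exact norm_le_decaySeminorm_mul f _

lemma summable_norm_term_mul_schwartzMap (ha : ∀ N : ℕ, ∑ n ∈ Finset.Icc 1 N, ‖a n‖ ≤ B * N)
    (f : 𝓢(ℝ, ℂ)) (y : ℝ) : Summable fun n : ℕ ↦ ‖LSeries.term a 1 n * f (y - Real.log n)‖ := by
  obtain ⟨C, hC⟩ := exists_sum_norm_term_one_mul_inv_one_add_sq_le ha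
  exact ((summable_of_sum_le (fun n ↦ by positivity) (hC y)).mul_left _).of_nonneg_of_le
    (fun n ↦ norm_nonneg _) (norm_term_mul_schwartzMap_le a f y)

lemma exists_norm_logConv_le (ha : ∀ N : ℕ, ∑ n ∈ Finset.Icc 1 N, ‖a n‖ ≤ B * N) :
    ∃ C, ∀ (f : 𝓢(ℝ, ℂ)) (y : ℝ), ‖logConv a 1 f y‖ ≤ decaySeminorm f * C := by
  obtain ⟨C, hC⟩ := exists_sum_norm_term_one_mul_inv_one_add_sq_le ha
  refine ⟨C, fun f y ↦ ?_⟩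
  have hsum := summable_of_sum_le (fun n ↦ by positivity) (hC y)
  refine (tsum_of_norm_bounded (hsum.mul_left _).hasSum
    (norm_term_mul_schwartzMap_le a f y)).trans ?_
  rw [tsum_mul_left]
  gcongr
  exact hsum.tsum_le_of_sum_le (hC y)

lemma logConv_sub (ha : ∀ N : ℕ, ∑ n ∈ Finset.Icc 1 N, ‖a n‖ ≤ B * N) (f g : 𝓢(ℝ, ℂ)) (y : ℝ) :
    logConv a 1 (f - g : 𝓢(ℝ, ℂ)) y = logConv a 1 f y - logConv a 1 g y := by
  simp only [logConv, sub_apply, mul_sub]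
  exact (summable_norm_term_mul_schwartzMap ha f y).of_norm.tsum_sub
    (summable_norm_term_mul_schwartzMap ha g y).of_norm

lemma tendstoUniformly_logConv (ha : ∀ N : ℕ, ∑ n ∈ Finset.Icc 1 N, ‖a n‖ ≤ B * N)
    (f : 𝓢(ℝ, ℂ)) :
    TendstoUniformly (fun g : 𝓢(ℝ, ℂ) ↦ logConv a 1 g) (logConv a 1 f) (𝓝 f) := by
  obtain ⟨C, hC⟩ := exists_norm_logConv_le ha
  have hlim : Tendsto (fun g ↦ decaySeminorm (f - g) * C) (𝓝 f) (𝓝 0) := by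
    have hcont : Continuous fun g ↦ decaySeminorm (f - g) * C :=
      (continuous_decaySeminorm.comp (continuous_const.sub continuous_id)).mul continuous_const
    simpa using hcont.tendsto f
  rw [Metric.tendstoUniformly_iff]
  intro ε hε
  filter_upwards [hlim.eventually_lt_const hε] with g hg y
  rw [dist_eq_norm, ← logConv_sub ha]
  exact (hC (f - g) y).trans_lt hg

lemma tendsto_logConv_add_nhdsGT_zero {s : ℂ} {f : ℝ → ℂ} {y : ℝ}
    (h : Summable fun n : ℕ ↦ ‖LSeries.term a s n * f (y - Real.log n)‖) :
    Tendsto (fun δ : ℝ ↦ logConv a (s + δ) f y) (𝓝[>] 0) (𝓝 (logConv a s f y)) := by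
  refine tendsto_tsum_of_dominated_convergence h (fun n ↦ ?_) ?_
  · have hterm : ContinuousAt (fun δ : ℝ ↦ LSeries.term a (s + δ) n) 0 :=
      (LSeries.hasDerivAt_term a n _).continuousAt.comp (f := fun δ : ℝ ↦ s + δ) (by fun_prop)
    have hlim := hterm.tendsto.mono_left (nhdsWithin_le_nhds (s := Ioi 0))
    rw [ofReal_zero, add_zero] at hlim
    exact hlim.mul_const _
  · filter_upwards [self_mem_nhdsWithin] with δ hδ n
    rw [norm_mul, norm_mul]
    gcongr
    exact LSeries.norm_term_le_of_re_le_re a (by simpa using (mem_Ioi.1 hδ).le) n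

end LogConv

section FourierInversion

variable {a : ℕ → ℂ} {g : ℝ → ℂ}

lemma fourierInv_eq_integral_fourierChar_mul (g : ℝ → ℂ) (y : ℝ) :
    𝓕⁻ g y = ∫ t, (𝐞 (t * y) : ℂ) * g t := by
  simp only [Real.fourierInv_eq, Circle.smul_def, smul_eq_mul, RCLike.inner_apply,
    conj_trivial, mul_comm y]

lemma integrable_fourierChar_mul (hg : Integrable g) (y : ℝ) :
    Integrable fun t ↦ (𝐞 (t * y) : ℂ) * g t := by
  have hchar : Continuous fun t : ℝ ↦ (𝐞 (t * y) : ℂ) := by fun_prop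
  exact hg.bdd_mul hchar.aestronglyMeasurable (Eventually.of_forall fun t ↦ (Circle.norm_coe _).le)

lemma term_add_two_pi_mul_I (a : ℕ → ℂ) (s : ℂ) (t : ℝ) (n : ℕ) :
    LSeries.term a (s + 2 * Real.pi * t * I) n =
      (𝐞 (-(t * Real.log n)) : ℂ) * LSeries.term a s n := by
  rcases eq_or_ne n 0 with rfl | hn
  · simp only [LSeries.term_zero, mul_zero]
  have hn' : (n : ℂ) ≠ 0 := by exact_mod_cast hn
  have hchar : (n : ℂ) ^ (2 * Real.pi * t * I) = 𝐞 (t * Real.log n) := by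
    rw [Complex.cpow_def_of_ne_zero hn', Real.fourierChar_apply, ← Complex.natCast_log]
    push_cast
    ring_nf
  rw [LSeries.term_of_ne_zero hn, LSeries.term_of_ne_zero hn, Complex.cpow_add _ _ hn', hchar,
    AddChar.map_neg_eq_inv, Circle.coe_inv, div_mul_eq_div_div, div_eq_inv_mul _ (_ : ℂ)]

lemma logConv_fourierInv {s : ℂ} (hs : LSeriesSummable a s) (hg : Integrable g) (y : ℝ) :
    logConv a s (𝓕⁻ g) y = 𝓕⁻ (fun t ↦ g t * LSeries a (s + 2 * Real.pi * t * I)) y := by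
  have hsum := hasSum_integral_of_summable_integral_norm (μ := volume)
    (F := fun (n : ℕ) (t : ℝ) ↦
      LSeries.term a s n * ((𝐞 (t * (y - Real.log n)) : ℂ) * g t))
    (fun n ↦ (integrable_fourierChar_mul hg _).const_mul _)
    (by
      simp only [norm_mul, Circle.norm_coe, one_mul, integral_const_mul]
      exact hs.norm.mul_right _)
  simp only [integral_const_mul, ← fourierInv_eq_integral_fourierChar_mul] at hsum
  rw [logConv, hsum.tsum_eq, fourierInv_eq_integral_fourierChar_mul]
  congr 1 with t
  rw [LSeries, ← tsum_mul_left, ← tsum_mul_left]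
  congr 1 with n
  rw [term_add_two_pi_mul_I, mul_sub, sub_eq_add_neg, AddChar.map_add_eq_mul, Circle.coe_mul]
  ring

lemma integral_exp_neg_mul_fourierChar_Ioi {δ : ℝ} (hδ : 0 < δ) (t : ℝ) :
    ∫ u in Ioi (0 : ℝ), (Real.exp (-δ * u) : ℂ) * (𝐞 (-(t * u)) : ℂ) =
      (δ + 2 * Real.pi * t * I)⁻¹ := by
  have hexp (u : ℝ) : (Real.exp (-δ * u) : ℂ) * (𝐞 (-(t * u)) : ℂ) =
      cexp (-(δ + 2 * Real.pi * t * I) * u) := by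
    rw [Real.fourierChar_apply, Complex.ofReal_exp, ← Complex.exp_add]
    push_cast
    ring_nf
  simp only [hexp]
  rw [integral_exp_mul_complex_Ioi (by simpa using hδ), ofReal_zero, mul_zero, Complex.exp_zero,
    neg_div_neg_eq, one_div]

lemma fourierInv_div_add_two_pi_mul_I (hg : Integrable g) {δ : ℝ} (hδ : 0 < δ) (y : ℝ) :
    𝓕⁻ (fun t ↦ g t / (δ + 2 * Real.pi * t * I)) y =
      ∫ u in Ioi (0 : ℝ), (Real.exp (-δ * u) : ℂ) * 𝓕⁻ g (y - u) := by
  have hchar (t u : ℝ) : (𝐞 (t * (y - u)) : ℂ) = 𝐞 (t * y) * 𝐞 (-(t * u)) := by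
    rw [mul_sub, sub_eq_add_neg, AddChar.map_add_eq_mul, Circle.coe_mul]
  have hint : Integrable (fun z : ℝ × ℝ ↦
      (𝐞 (z.1 * (y - z.2)) : ℂ) * (g z.1 * (Real.exp (-δ * z.2) : ℂ)))
      (volume.prod (volume.restrict (Ioi 0))) := by
    have hexp : Integrable (fun u : ℝ ↦ (Real.exp (-δ * u) : ℂ)) (volume.restrict (Ioi 0)) :=
      (exp_neg_integrableOn_Ioi 0 hδ).ofReal
    have hcont : Continuous fun z : ℝ × ℝ ↦ (𝐞 (z.1 * (y - z.2)) : ℂ) := by fun_prop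
    exact (hg.mul_prod hexp).bdd_mul hcont.aestronglyMeasurable
      (Eventually.of_forall fun z ↦ (Circle.norm_coe _).le)
  simp only [fourierInv_eq_integral_fourierChar_mul, div_eq_mul_inv,
    ← integral_exp_neg_mul_fourierChar_Ioi hδ, ← integral_const_mul]
  rw [integral_integral_swap (hint.congr (Eventually.of_forall fun z ↦ ?_))]
  · simp only [hchar]
    congr with u
    congr with t
    ring
  · simp only [hchar, Function.uncurry]
    ring

lemma tendsto_fourierInv_mul_nhdsGT_zero (hg : Continuous g) (hgc : HasCompactSupport g)
    {G : ℂ → ℂ} {σ : ℝ} (hG : ContinuousOn G {s | σ ≤ s.re}) (y : ℝ) :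
    Tendsto (fun δ : ℝ ↦ 𝓕⁻ (fun t ↦ g t * G (σ + δ + 2 * Real.pi * t * I)) y) (𝓝[>] 0)
      (𝓝 (𝓕⁻ (fun t ↦ g t * G (σ + 2 * Real.pi * t * I)) y)) := by
  simp only [fourierInv_eq_integral_fourierChar_mul]
  have hcont : ContinuousOn
      (fun δ : ℝ ↦ ∫ t, (𝐞 (t * y) : ℂ) * (g t * G (σ + δ + 2 * Real.pi * t * I))) (Ici 0) := by
    refine continuousOn_integral_of_compact_support hgc ?_ fun δ t _ ht ↦ ?_
    · have hGc : ContinuousOn (fun z : ℝ × ℝ ↦ G (σ + z.1 + 2 * Real.pi * z.2 * I))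
          (Ici 0 ×ˢ univ) :=
        hG.comp (by fun_prop) fun z hz ↦ by simpa using hz.1
      exact (by fun_prop : Continuous fun z : ℝ × ℝ ↦ (𝐞 (z.2 * y) : ℂ)).continuousOn.mul
        ((hg.comp continuous_snd).continuousOn.mul hGc)
    · rw [image_eq_zero_of_notMem_tsupport ht, zero_mul, mul_zero]
  simpa using (hcont 0 self_mem_Ici).tendsto.mono_left (nhdsWithin_mono _ Ioi_subset_Ici_self)

lemma tendsto_integral_exp_neg_mul_nhdsGT_zero {f : ℝ → ℂ} (hf : IntegrableOn f (Ioi 0)) :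
    Tendsto (fun δ : ℝ ↦ ∫ u in Ioi (0 : ℝ), (Real.exp (-δ * u) : ℂ) * f u) (𝓝[>] 0)
      (𝓝 (∫ u in Ioi 0, f u)) := by
  refine tendsto_integral_filter_of_dominated_convergence (fun u ↦ ‖f u‖) ?_ ?_ hf.norm ?_
  · refine Eventually.of_forall fun δ ↦ .mul ?_ hf.aestronglyMeasurable
    exact (by fun_prop : Continuous fun u : ℝ ↦ (Real.exp (-δ * u) : ℂ)).aestronglyMeasurable
  · filter_upwards [self_mem_nhdsWithin] with δ (hδ : 0 < δ)
    filter_upwards [ae_restrict_mem measurableSet_Ioi] with u (hu : 0 < u)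
    rw [norm_mul, Complex.norm_real, Real.norm_of_nonneg (Real.exp_pos _).le]
    refine mul_le_of_le_one_left (norm_nonneg _) (Real.exp_le_one_iff.2 ?_)
    rw [neg_mul]
    exact neg_nonpos.2 (mul_pos hδ hu).le
  · refine Eventually.of_forall fun u ↦ ?_
    have hcont : Continuous fun δ : ℝ ↦ (Real.exp (-δ * u) : ℂ) * f u := by fun_prop
    simpa using (hcont.tendsto 0).mono_left nhdsWithin_le_nhds

end FourierInversion

section WienerIkehara

variable {a : ℕ → ℂ} {B : ℝ} {G : ℂ → ℂ} {A : ℂ}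

lemma logConv_fourierInv_eq_of_one_lt {g : ℝ → ℂ} (hg : Continuous g) (hgc : HasCompactSupport g)
    (ha : ∀ N : ℕ, ∑ n ∈ Finset.Icc 1 N, ‖a n‖ ≤ B * N)
    (hG : ContinuousOn G {s | 1 ≤ s.re})
    (hL : ∀ s : ℂ, 1 < s.re → LSeries a s = G s + A / (s - 1)) {δ : ℝ} (hδ : 0 < δ) (y : ℝ) :
    logConv a (1 + δ) (𝓕⁻ g) y = 𝓕⁻ (fun t ↦ g t * G (1 + δ + 2 * Real.pi * t * I)) y +
      A * ∫ u in Ioi (0 : ℝ), (Real.exp (-δ * u) : ℂ) * 𝓕⁻ g (y - u) := by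
  have hden (t : ℝ) : (δ + 2 * Real.pi * t * I : ℂ) ≠ 0 := fun h ↦
    hδ.ne' (by simpa using congrArg re h)
  have hreg : Integrable fun t : ℝ ↦ g t * G (1 + δ + 2 * Real.pi * t * I) :=
    (hg.mul (hG.comp_continuous (by fun_prop) fun t ↦ by simpa using hδ.le)
      ).integrable_of_hasCompactSupport hgc.mul_right
  have hpole : Integrable fun t : ℝ ↦ g t / (δ + 2 * Real.pi * t * I) := by
    simp only [div_eq_mul_inv]
    exact (hg.mul ((by fun_prop : Continuous fun t : ℝ ↦ (δ + 2 * Real.pi * t * I : ℂ)).inv₀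
      hden)).integrable_of_hasCompactSupport hgc.mul_right
  rw [logConv_fourierInv (lseriesSummable_of_sum_norm_le ha (by simpa using hδ))
    (hg.integrable_of_hasCompactSupport hgc), ← fourierInv_div_add_two_pi_mul_I
    (hg.integrable_of_hasCompactSupport hgc) hδ]
  simp only [fourierInv_eq_integral_fourierChar_mul]
  rw [← integral_const_mul, ← integral_add (integrable_fourierChar_mul hreg y)
    ((integrable_fourierChar_mul hpole y).const_mul A)]
  congr 1 with t
  rw [hL _ (by simpa using hδ), add_assoc (1 : ℂ), add_sub_cancel_left]
  ring

lemma logConv_one_fourierInv_eq {g : 𝓢(ℝ, ℂ)} (hgc : HasCompactSupport g)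
    (ha : ∀ N : ℕ, ∑ n ∈ Finset.Icc 1 N, ‖a n‖ ≤ B * N)
    (hG : ContinuousOn G {s | 1 ≤ s.re})
    (hL : ∀ s : ℂ, 1 < s.re → LSeries a s = G s + A / (s - 1)) (y : ℝ) :
    logConv a 1 (𝓕⁻ ⇑g) y = 𝓕⁻ (fun t ↦ g t * G (1 + 2 * Real.pi * t * I)) y +
      A * ∫ u in Ioi (0 : ℝ), 𝓕⁻ ⇑g (y - u) := by
  have hleft : Tendsto (fun δ : ℝ ↦ logConv a (1 + δ) (𝓕⁻ ⇑g) y) (𝓝[>] 0)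
      (𝓝 (logConv a 1 (𝓕⁻ ⇑g) y)) := by
    rw [← SchwartzMap.fourierInv_coe]
    exact tendsto_logConv_add_nhdsGT_zero (summable_norm_term_mul_schwartzMap ha _ y)
  have hreg := tendsto_fourierInv_mul_nhdsGT_zero g.continuous hgc (σ := 1) (by exact_mod_cast hG) y
  have hpole : Tendsto
      (fun δ : ℝ ↦ ∫ u in Ioi (0 : ℝ), (Real.exp (-δ * u) : ℂ) * 𝓕⁻ ⇑g (y - u)) (𝓝[>] 0)
      (𝓝 (∫ u in Ioi (0 : ℝ), 𝓕⁻ ⇑g (y - u))) := by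
    rw [← SchwartzMap.fourierInv_coe]
    exact tendsto_integral_exp_neg_mul_nhdsGT_zero
      ((𝓕⁻ g).integrable.comp_sub_left y).integrableOn
  rw [ofReal_one] at hreg
  refine tendsto_nhds_unique hleft ((hreg.add (hpole.const_mul A)).congr' ?_)
  filter_upwards [self_mem_nhdsWithin] with δ hδ
  exact (logConv_fourierInv_eq_of_one_lt g.continuous hgc ha hG hL hδ y).symm

lemma tendsto_fourierInv_atTop (g : ℝ → ℂ) : Tendsto (𝓕⁻ g) atTop (𝓝 0) := by
  simp only [funext (Real.fourierInv_eq_fourier_neg g)]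
  exact ((Real.zero_at_infty_fourier g).mono_left atBot_le_cocompact).comp tendsto_neg_atTop_atBot

lemma tendsto_integral_Ioi_comp_sub_atTop {f : ℝ → ℂ} (hf : Integrable f) :
    Tendsto (fun y ↦ ∫ u in Ioi (0 : ℝ), f (y - u)) atTop (𝓝 (∫ v, f v)) := by
  refine ((aecover_Iio tendsto_id).integral_tendsto_of_countably_generated hf).congr fun y ↦ ?_
  rw [← integral_indicator measurableSet_Ioi, ← integral_indicator measurableSet_Iio,
    ← integral_sub_left_eq_self _ volume y]
  congr 1 with u
  simp only [indicator, mem_Iio, mem_Ioi, id_eq, sub_lt_self_iff]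

lemma tendsto_logConv_one_fourierInv {g : 𝓢(ℝ, ℂ)} (hgc : HasCompactSupport g)
    (ha : ∀ N : ℕ, ∑ n ∈ Finset.Icc 1 N, ‖a n‖ ≤ B * N)
    (hG : ContinuousOn G {s | 1 ≤ s.re})
    (hL : ∀ s : ℂ, 1 < s.re → LSeries a s = G s + A / (s - 1)) :
    Tendsto (logConv a 1 (𝓕⁻ ⇑g)) atTop (𝓝 (A * ∫ v, 𝓕⁻ ⇑g v)) := by
  have hint : Integrable (𝓕⁻ ⇑g) := by
    rw [← SchwartzMap.fourierInv_coe]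
    exact (𝓕⁻ g).integrable
  have hlim := (tendsto_fourierInv_atTop fun t ↦ g t * G (1 + 2 * Real.pi * t * I)).add
    ((tendsto_integral_Ioi_comp_sub_atTop hint).const_mul A)
  rw [zero_add] at hlim
  exact hlim.congr fun y ↦ (logConv_one_fourierInv_eq hgc ha hG hL y).symm

lemma dense_setOf_hasCompactSupport_fourier :
    Dense {f : 𝓢(ℝ, ℂ) | HasCompactSupport (𝓕 f : 𝓢(ℝ, ℂ))} :=
  dense_setOf_hasCompactSupport_schwartzMap.preimage
    (FourierTransform.fourierCLE ℂ 𝓢(ℝ, ℂ)).toHomeomorph.isOpenMap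

theorem tendsto_logConv_one (ha : ∀ N : ℕ, ∑ n ∈ Finset.Icc 1 N, ‖a n‖ ≤ B * N)
    (hG : ContinuousOn G {s | 1 ≤ s.re})
    (hL : ∀ s : ℂ, 1 < s.re → LSeries a s = G s + A / (s - 1)) (f : 𝓢(ℝ, ℂ)) :
    Tendsto (logConv a 1 f) atTop (𝓝 (A * ∫ v, f v)) := by
  let S : Set 𝓢(ℝ, ℂ) := {g | HasCompactSupport (𝓕 g : 𝓢(ℝ, ℂ))}
  have : (nhdsWithin f S).NeBot :=
    mem_closure_iff_nhdsWithin_neBot.1 (dense_setOf_hasCompactSupport_fourier f)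
  have hbandLimited : ∀ᶠ g : 𝓢(ℝ, ℂ) in nhdsWithin f S,
      Tendsto (logConv a 1 g) atTop (𝓝 (A * ∫ v, g v)) := by
    filter_upwards [self_mem_nhdsWithin] with g hg
    simpa [← SchwartzMap.fourierInv_coe] using tendsto_logConv_one_fourierInv hg ha hG hL
  have hunif : TendstoUniformly (fun (g : 𝓢(ℝ, ℂ)) y ↦ logConv a 1 g y) (logConv a 1 f)
      (nhdsWithin f S) :=
    fun u hu ↦ nhdsWithin_le_nhds (tendstoUniformly_logConv ha f u hu)
  have hintegral : Continuous fun g : 𝓢(ℝ, ℂ) ↦ A * ∫ v, g v := by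
    simp only [← SchwartzMap.integralCLM_apply ℂ]
    fun_prop
  exact hunif.tendsto_of_eventually_tendsto hbandLimited
    ((hintegral.tendsto f).mono_left nhdsWithin_le_nhds)

theorem tendsto_mul_tsum_schwartzMap (ha : ∀ N : ℕ, ∑ n ∈ Finset.Icc 1 N, ‖a n‖ ≤ B * N)
    (hG : ContinuousOn G {s | 1 ≤ s.re})
    (hL : ∀ s : ℂ, 1 < s.re → LSeries a s = G s + A / (s - 1)) (ha₀ : a 0 = 0) (g : 𝓢(ℝ, ℂ)) :
    Tendsto (fun x : ℝ ↦ x * ∑' n : ℕ, a n * g (x * n)) (𝓝[>] 0)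
      (𝓝 (A * ∫ u in Ioi 0, g u)) := by
  rw [← integral_logPullback]
  refine ((tendsto_logConv_one ha hG hL (logPullback g)).comp
    (tendsto_neg_atBot_atTop.comp Real.tendsto_log_nhdsGT_zero)).congr' ?_
  filter_upwards [self_mem_nhdsWithin] with x (hx : 0 < x)
  rw [Function.comp_apply, Function.comp_apply, logConv, ← tsum_mul_left]
  congr 1 with n
  rcases eq_or_ne n 0 with rfl | hn
  · simp only [LSeries.term_zero, ha₀, zero_mul, mul_zero]
  have hexp : Real.exp (-(-Real.log x - Real.log n)) = x * n := by
    rw [neg_sub, sub_neg_eq_add, add_comm, Real.exp_add, Real.exp_log hx,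
      Real.exp_log (by positivity)]
  have hn' : (n : ℂ) ≠ 0 := by exact_mod_cast hn
  rw [LSeries.term_of_ne_zero hn, cpow_one, logPullback_apply, hexp, Complex.real_smul, ofReal_mul,
    ofReal_natCast]
  field_simp

end WienerIkehara

lemma continuousOn_lseries_of_summable {f : ℕ → ℂ} {s₀ : ℂ} (hf : LSeriesSummable f s₀) :
    ContinuousOn (LSeries f) {s | s₀.re ≤ s.re} :=
  continuousOn_tsum
    (fun n s _ ↦ (LSeries.hasDerivAt_term f n s).continuousAt.continuousWithinAt)
    hf.norm fun n _ hs ↦ LSeries.norm_term_le_of_re_le_re f hs n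

section PrimesInResidueClass

open ArithmeticFunction.vonMangoldt

variable {q : ℕ} (c : ZMod q)

/-- The weights `log p` at the primes `p ≡ c (mod q)`, extended by `0`. -/
noncomputable def residueClassPrimeLog (n : ℕ) : ℂ :=
  if n.Prime then (residueClass c n : ℂ) else 0

lemma sum_norm_residueClassPrimeLog_le (N : ℕ) :
    ∑ n ∈ Finset.Icc 1 N, ‖residueClassPrimeLog c n‖ ≤ Real.log 4 * N := by
  have hle (n : ℕ) : ‖residueClassPrimeLog c n‖ ≤ if n.Prime then Real.log n else 0 := by
    rw [residueClassPrimeLog, apply_ite norm, norm_zero, norm_real,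
      Real.norm_of_nonneg (residueClass_nonneg c n)]
    split_ifs with hn
    · exact (residueClass_le c n).trans_eq (ArithmeticFunction.vonMangoldt_apply_prime hn)
    · rfl
  calc ∑ n ∈ Finset.Icc 1 N, ‖residueClassPrimeLog c n‖
      ≤ ∑ n ∈ Finset.Icc 1 N, if n.Prime then Real.log n else 0 := Finset.sum_le_sum fun n _ ↦ hle n
    _ = Chebyshev.theta N := by
        rw [← Finset.sum_filter, Chebyshev.theta, Nat.floor_natCast]
        rfl
    _ ≤ Real.log 4 * N := Chebyshev.theta_le_log4_mul_x (Nat.cast_nonneg N)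

lemma lseriesSummable_residueClass_sub_residueClassPrimeLog :
    LSeriesSummable (fun n ↦ (residueClass c n : ℂ) - residueClassPrimeLog c n) 1 := by
  refine (Complex.summable_ofReal.2 (summable_residueClass_non_primes_div c)).congr fun n ↦ ?_
  rcases eq_or_ne n 0 with rfl | hn
  · simp
  rw [LSeries.term_of_ne_zero hn, cpow_one, residueClassPrimeLog]
  split_ifs <;> simp

lemma exists_continuousOn_lseries_residueClassPrimeLog_eq [NeZero q] (hc : IsUnit c) :
    ∃ G : ℂ → ℂ, ContinuousOn G {s | 1 ≤ s.re} ∧ ∀ s : ℂ, 1 < s.re →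
      LSeries (residueClassPrimeLog c) s = G s + (q.totient : ℂ)⁻¹ / (s - 1) := by
  have hnonprime := lseriesSummable_residueClass_sub_residueClassPrimeLog c
  refine ⟨_, (continuousOn_LFunctionResidueClassAux c).sub
    (continuousOn_lseries_of_summable hnonprime), fun s hs ↦ ?_⟩
  have hprime : LSeriesSummable (residueClassPrimeLog c) s :=
    lseriesSummable_of_sum_norm_le (sum_norm_residueClassPrimeLog_le c) hs
  have hsplit : LSeries (fun n ↦ (residueClass c n : ℂ)) s =
      LSeries (fun n ↦ (residueClass c n : ℂ) - residueClassPrimeLog c n) s +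
        LSeries (residueClassPrimeLog c) s := by
    rw [← LSeries_add (hnonprime.of_re_le_re (by exact hs.le)) hprime]
    congr 1 with n
    exact (sub_add_cancel _ _).symm
  simp only [Pi.sub_apply, eqOn_LFunctionResidueClassAux hc hs, hsplit]
  ring

theorem tendsto_mul_tsum_residueClassPrimeLog [NeZero q] (hc : IsUnit c) (g : 𝓢(ℝ, ℂ)) :
    Tendsto (fun x : ℝ ↦ x * ∑' n : ℕ, residueClassPrimeLog c n * g (x * n)) (𝓝[>] 0)
      (𝓝 ((q.totient : ℂ)⁻¹ * ∫ u in Ioi 0, g u)) := by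
  obtain ⟨G, hG, hL⟩ := exists_continuousOn_lseries_residueClassPrimeLog_eq c hc
  exact tendsto_mul_tsum_schwartzMap (sum_norm_residueClassPrimeLog_le c) hG hL
    (if_neg Nat.not_prime_zero) g

lemma residueClassPrimeLog_one_of_prime {p : ℕ} (hp : p.Prime) :
    residueClassPrimeLog (1 : ZMod 1) p = Real.log p := by
  rw [residueClassPrimeLog, if_pos hp, residueClass,
    indicator_of_mem (s := {n : ℕ | (n : ZMod 1) = 1}) (Subsingleton.elim _ _),
    ArithmeticFunction.vonMangoldt_apply_prime hp]

end PrimesInResidueClass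

lemma ofReal_primePhi {x : ℝ} (hx : 0 ≤ x) :
    (primePhi x : ℂ) = ∑' n : ℕ, residueClassPrimeLog (1 : ZMod 1) n *
      gaussianSchwartzMap Real.pi Real.pi_pos (√x * n : ℝ) := by
  have hsupport : (Function.support fun n : ℕ ↦ residueClassPrimeLog (1 : ZMod 1) n *
      gaussianSchwartzMap Real.pi Real.pi_pos (√x * n : ℝ)) ⊆ {p | p.Prime} := by
    refine Function.support_subset_iff'.2 fun n (hn : ¬ n.Prime) ↦ ?_
    rw [residueClassPrimeLog, if_neg hn, zero_mul]
  rw [← tsum_subtype_eq_of_support_subset hsupport, primePhi, ofReal_tsum]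
  refine tsum_congr fun p : Nat.Primes ↦ ?_
  rw [residueClassPrimeLog_one_of_prime p.2, gaussianSchwartzMap_apply, ofReal_mul, ofReal_exp,
    ← ofReal_pow, mul_pow, Real.sq_sqrt hx]
  push_cast
  ring_nf

/-- lim_{x→0⁺} 2√x·∑_p (log p)·e^{−p²πx} = 1. -/
theorem stmt_13 :
    Tendsto (fun x : ℝ => 2 * Real.sqrt x * primePhi x) (𝓝[>] (0 : ℝ)) (𝓝 1) := by
  have hgauss : ∫ u in Ioi (0 : ℝ), gaussianSchwartzMap Real.pi Real.pi_pos u = 1 / 2 := by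
    simp only [gaussianSchwartzMap_apply]
    rw [integral_gaussian_complex_Ioi Real.pi_pos, div_self (ofReal_ne_zero.2 Real.pi_ne_zero),
      one_cpow]
  have hsqrt : Tendsto Real.sqrt (𝓝[>] 0) (𝓝[>] 0) := by
    refine tendsto_nhdsWithin_iff.2 ⟨?_, ?_⟩
    · simpa using (Real.continuous_sqrt.tendsto 0).mono_left nhdsWithin_le_nhds
    · exact eventually_mem_nhdsWithin.mono fun _ ↦ Real.sqrt_pos.2
  have hlim := ((tendsto_mul_tsum_residueClassPrimeLog (1 : ZMod 1) isUnit_one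
    (gaussianSchwartzMap Real.pi Real.pi_pos)).comp hsqrt).const_mul 2
  rw [hgauss] at hlim
  rw [← tendsto_ofReal_iff]
  convert hlim.congr' ?_ using 2
  · norm_num
  filter_upwards [self_mem_nhdsWithin] with x (hx : 0 < x)
  rw [Function.comp_apply, ← ofReal_primePhi hx.le]
  push_cast
  ring
end
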